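/- Let S be the set of positive integers that are expressible as a sum of two squares of integers. Then n/σ(n) has a continuous, strictly increasing distribution function when restricted to S: for every u ∈ [0,1], the limit lim_{x→∞} #{n ≤ x : n ∈ S and n/σ(n) ≤ u} / #{n ≤ x : n ∈ S} exists, and as a function of u it is continuous and strictly increasing on [0,1]. -/

import Mathlib

/-!
Write `S` for the sums of two squares, `cnt N` for the number of members of `S` up to `N`, and
`h n = n / σ(n)`.

The arithmetic input is that `cnt (N / m) / cnt N → 1 / m` for each fixed `m`
(`tendsto_cnt_div`). It follows from the prime number theorem for the progression `1 mod 4`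
(`tendsto_psiOne_div`). That theorem is deduced from the analytic continuation of the logarithmic
derivatives of Dirichlet `L`-functions to the line `re s = 1` by a Wiener-Ikehara Tauberian theorem
(`tendsto_of_laplace`), proved with the Fejér kernel. Evaluating `∑ log n` over `n ∈ S` up to `N` in
two ways gives `cnt N * log N ~ (N / 2) * ∑ 1 / n`, and the last sum varies slowly. Iterating with
`m = 4` also gives the uniform bound `cnt (N / d) ≤ C / √d * cnt N` (`exists_cnt_div_le`).

The multiples of `d` in `S` are exactly `lift d * S`, where `lift d` is the least multiple of `d`
that lies in `S`. So divisibility by `d` has density `1 / lift d` in `S`, and the uniform bound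
makes the contribution of large divisors to `σ(n) / n` negligible on average. Three facts follow.

* `exists_tendsto_avg_lipschitz`: Lipschitz functions of `h` have a mean value over `S`, because
  `h n` is close on average to `h (gcd n K!)`, a finite combination of divisibility conditions.
* `small_ball`: values in a short interval around `u` are rare. For `u > 0`, take a finite set `P`
  of large primes `p ≡ 1 mod 4` with `∑ 1 / p` large. Almost all `n ∈ S` have a simple prime factor
  in `P`. Those with `h n` close to `u` are determined by the cofactor `n / p`, since the values
  `p / (p + 1)` are separated.
* `exists_interval`: every interval `(a, b]` receives a positive proportion of the values. Some
  product `m` of distinct primes `p ≡ 1 mod 4` has `h m` well inside, and a positive proportion of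
  the `k ∈ S` are coprime to `m` with `h k` close to `1`. The products `m * k` do the job.

The first two facts together give the existence of the limit, the second its continuity, and the
third its strict monotonicity.
-/

open Filter ArithmeticFunction

/-- The ratio `n/σ(n)` as a real number. -/
noncomputable def sigmaRatio (n : ℕ) : ℝ := (n : ℝ) / ((sigma 1 n : ℕ) : ℝ)

/-- `n` is a sum of two squares of integers. -/
def IsSumTwoSquares (n : ℕ) : Prop := ∃ a b : ℤ, (n : ℤ) = a ^ 2 + b ^ 2

namespace SumTwoSq
open MeasureTheory Topology Set

/-! ### The Fejér kernel -/

/-- The Fejér kernel `(2 sin (v/2) / v)²`, which is the Fourier transform of the triangle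
function `max (1 - |t|) 0`. -/
noncomputable def fejer (v : ℝ) : ℝ := Real.sinc (v / 2) ^ 2

lemma fejer_nonneg (v : ℝ) : 0 ≤ fejer v := sq_nonneg _

lemma continuous_fejer : Continuous fejer :=
  (Real.continuous_sinc.comp (by fun_prop)).pow 2

lemma fejer_le (v : ℝ) : fejer v ≤ 5 * (1 + v ^ 2)⁻¹ := by
  have h1 : fejer v ≤ 1 := by
    have := Real.abs_sinc_le_one (v / 2)
    unfold fejer
    exact (sq_le_one_iff_abs_le_one _).2 this
  have h2 : v ^ 2 * fejer v ≤ 4 := by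
    unfold fejer
    rcases eq_or_ne v 0 with rfl | hv
    · simp
    · rw [Real.sinc_of_ne_zero (by simpa using hv)]
      have : v ^ 2 * (Real.sin (v / 2) / (v / 2)) ^ 2 = 4 * Real.sin (v / 2) ^ 2 := by
        field_simp
        ring
      rw [this]
      nlinarith [Real.sin_sq_le_one (v / 2)]
  rw [← div_eq_mul_inv, le_div_iff₀ (by positivity)]
  nlinarith

lemma integrable_fejer : Integrable fejer := by
  refine (integrable_inv_one_add_sq.const_mul 5).mono' continuous_fejer.aestronglyMeasurable ?_
  filter_upwards with v
  rw [Real.norm_of_nonneg (fejer_nonneg v)]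
  exact fejer_le v

lemma integral_fejer_pos : 0 < ∫ v, fejer v :=
  integral_pos_of_integrable_nonneg_nonzero (x := 0) continuous_fejer integrable_fejer
    fejer_nonneg (by simp [fejer])

/-- The Fejér kernel as a Fourier transform. -/
lemma fejer_eq (v : ℝ) :
    ∫ t in (-1 : ℝ)..1, ((1 - |t| : ℝ) : ℂ) * Complex.exp (Complex.I * t * v) = fejer v := by
  have hc : Continuous fun t : ℝ ↦
      ((1 - |t| : ℝ) : ℂ) * Complex.exp (Complex.I * t * v) := by fun_prop
  rw [← intervalIntegral.integral_add_adjacent_intervals (hc.intervalIntegrable (-1) 0)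
    (hc.intervalIntegrable 0 1)]
  rcases eq_or_ne v 0 with rfl | hv
  · have e1 : ∫ t in (0 : ℝ)..1, ((1 - |t| : ℝ) : ℂ) = ((1 / 2 : ℝ) : ℂ) := by
      rw [intervalIntegral.integral_ofReal, intervalIntegral.integral_congr (g := fun t ↦ 1 - t)]
      · rw [intervalIntegral.integral_sub (by simp) (by simp)]
        norm_num [integral_id]
      · intro t ht
        rw [uIcc_of_le zero_le_one] at ht
        simp [abs_of_nonneg ht.1]
    have e2 : ∫ t in (-1 : ℝ)..0, ((1 - |t| : ℝ) : ℂ) = ((1 / 2 : ℝ) : ℂ) := by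
      rw [intervalIntegral.integral_ofReal, intervalIntegral.integral_congr (g := fun t ↦ 1 + t)]
      · rw [intervalIntegral.integral_add (by simp) (by simp)]
        norm_num [integral_id]
      · intro t ht
        rw [uIcc_of_le (by norm_num)] at ht
        simp [abs_of_nonpos ht.2]
    simp only [Complex.ofReal_zero, mul_zero, Complex.exp_zero, mul_one, e1, e2]
    norm_num [fejer]
  have hv' : (v : ℂ) ≠ 0 := by exact_mod_cast hv
  have hI := Complex.I_ne_zero
  have hexp (t : ℝ) : HasDerivAt (fun t : ℝ ↦ Complex.exp (Complex.I * t * v))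
      (Complex.exp (Complex.I * t * v) * (Complex.I * v)) t := by
    have : HasDerivAt (fun t : ℝ ↦ Complex.I * (t : ℂ) * v) (Complex.I * v) t := by
      have := ((Complex.ofRealCLM.hasDerivAt (x := t)).const_mul Complex.I).mul_const (v : ℂ)
      simpa using this
    exact this.cexp
  have hid (t : ℝ) : HasDerivAt (fun t : ℝ ↦ (t : ℂ)) 1 t := by
    exact Complex.ofRealCLM.hasDerivAt (x := t)
  have e1 : ∫ t in (0 : ℝ)..1, ((1 - |t| : ℝ) : ℂ) * Complex.exp (Complex.I * t * v)
      = Complex.exp (Complex.I * v) / (Complex.I * v) ^ 2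
        - 1 / (Complex.I * v) - 1 / (Complex.I * v) ^ 2 := by
    have : ∀ t ∈ uIcc (0 : ℝ) 1, ((1 - |t| : ℝ) : ℂ) * Complex.exp (Complex.I * t * v) =
        (1 - (t : ℂ)) * Complex.exp (Complex.I * t * v) := by
      intro t ht
      rw [uIcc_of_le zero_le_one] at ht
      rw [abs_of_nonneg ht.1]; push_cast; rfl
    rw [intervalIntegral.integral_congr this]
    rw [intervalIntegral.integral_eq_sub_of_hasDerivAt (f := fun t : ℝ ↦
      (1 - (t : ℂ)) * Complex.exp (Complex.I * t * v) / (Complex.I * v) +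
        Complex.exp (Complex.I * t * v) / (Complex.I * v) ^ 2)]
    · simp
      ring
    · intro t _
      have := ((((hid t).const_sub 1).mul (hexp t)).div_const (Complex.I * v)).add
        ((hexp t).div_const ((Complex.I * v) ^ 2))
      refine HasDerivAt.congr_deriv this ?_
      field_simp
      ring
    · exact Continuous.intervalIntegrable (by fun_prop) _ _
  have e2 : ∫ t in (-1 : ℝ)..0, ((1 - |t| : ℝ) : ℂ) * Complex.exp (Complex.I * t * v)
      = 1 / (Complex.I * v) - 1 / (Complex.I * v) ^ 2
        + Complex.exp (-(Complex.I * v)) / (Complex.I * v) ^ 2 := by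
    have : ∀ t ∈ uIcc (-1 : ℝ) 0, ((1 - |t| : ℝ) : ℂ) * Complex.exp (Complex.I * t * v) =
        (1 + (t : ℂ)) * Complex.exp (Complex.I * t * v) := by
      intro t ht
      rw [uIcc_of_le (by norm_num)] at ht
      rw [abs_of_nonpos ht.2]; push_cast; ring
    rw [intervalIntegral.integral_congr this]
    rw [intervalIntegral.integral_eq_sub_of_hasDerivAt (f := fun t : ℝ ↦
      (1 + (t : ℂ)) * Complex.exp (Complex.I * t * v) / (Complex.I * v) -
        Complex.exp (Complex.I * t * v) / (Complex.I * v) ^ 2)]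
    · simp
    · intro t _
      have := ((((hid t).const_add 1).mul (hexp t)).div_const (Complex.I * v)).sub
        ((hexp t).div_const ((Complex.I * v) ^ 2))
      refine HasDerivAt.congr_deriv this ?_
      field_simp
      ring
    · exact Continuous.intervalIntegrable (by fun_prop) _ _
  rw [e1, e2]
  have hf : fejer v = (2 - 2 * Real.cos v) / v ^ 2 := by
    rw [fejer, Real.sinc_of_ne_zero (by simpa using hv)]
    have := Real.cos_sq' (v / 2)
    have h2 := Real.cos_two_mul (v / 2)
    rw [mul_div_cancel₀ _ (two_ne_zero)] at h2
    rw [h2, this]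
    field_simp
    ring
  rw [hf]
  push_cast
  have hcos : 2 * Complex.cos v = Complex.exp (Complex.I * v) + Complex.exp (-(Complex.I * v)) := by
    rw [Complex.two_cos, mul_comm Complex.I, neg_mul]
  rw [hcos, mul_pow, Complex.I_sq]
  field_simp
  ring

/-! ### Fejér averages and the Laplace transform -/

lemma integrable_fejer_comp {T : ℝ} (hT : 0 < T) (U : ℝ) :
    Integrable fun u ↦ fejer (T * (U - u)) := by
  have := (integrable_fejer.comp_mul_left' hT.ne').comp_sub_left U
  exact this

/-- Parseval's identity for the Fejér average of `R u * exp (-ε u)`. -/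
lemma laplace_fejer {R : ℝ → ℝ} {M : ℝ} (hR : Measurable R) (hM : ∀ u, |R u| ≤ M)
    {H : ℂ → ℂ} (hL : ∀ z : ℂ, 0 < z.re →
      ∫ u in Ioi (0 : ℝ), (R u : ℂ) * Complex.exp (-z * u) = H z)
    (T U : ℝ) {ε : ℝ} (hε : 0 < ε) :
    ((∫ u in Ioi (0 : ℝ), R u * Real.exp (-ε * u) * fejer (T * (U - u)) : ℝ) : ℂ) =
      ∫ t in (-1 : ℝ)..1, ((1 - |t| : ℝ) : ℂ) * Complex.exp (Complex.I * t * (T * U : ℝ)) *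
        H (ε + Complex.I * (T * t)) := by
  have hM0 : 0 ≤ M := (abs_nonneg _).trans (hM 0)
  set G : ℝ → ℝ → ℂ := fun u t ↦ (R u : ℂ) * Complex.exp (-ε * u) *
    (((1 - |t| : ℝ) : ℂ) * Complex.exp (Complex.I * t * (T * (U - u) : ℝ))) with hG
  have h1 : ((∫ u in Ioi (0 : ℝ), R u * Real.exp (-ε * u) * fejer (T * (U - u)) : ℝ) : ℂ) =
      ∫ u in Ioi (0 : ℝ), ∫ t in Ioc (-1 : ℝ) 1, G u t := by
    rw [← integral_complex_ofReal]
    refine integral_congr_ae (Eventually.of_forall fun u ↦ ?_)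
    simp only [hG]
    rw [integral_const_mul, ← intervalIntegral.integral_of_le (by norm_num),
      fejer_eq]
    push_cast
    rfl
  have h2 : ∀ t : ℝ, ∫ u in Ioi (0 : ℝ), G u t = ((1 - |t| : ℝ) : ℂ) *
      Complex.exp (Complex.I * t * (T * U : ℝ)) * H (ε + Complex.I * (T * t)) := by
    intro t
    rw [← hL _ (by simpa using hε), ← integral_const_mul]
    refine integral_congr_ae (Eventually.of_forall fun u ↦ ?_)
    simp only [hG]
    have : Complex.exp (-ε * u) * Complex.exp (Complex.I * t * (T * (U - u) : ℝ)) =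
        Complex.exp (Complex.I * t * (T * U : ℝ)) *
          Complex.exp (-(ε + Complex.I * (T * t)) * u) := by
      rw [← Complex.exp_add, ← Complex.exp_add]
      congr 1
      push_cast
      ring
    linear_combination ((R u : ℂ) * ((1 - |t| : ℝ) : ℂ)) * this
  rw [h1, integral_integral_swap, intervalIntegral.integral_of_le (by norm_num)]
  · exact integral_congr_ae (Eventually.of_forall fun t ↦ h2 t)
  · have hi1 : IntegrableOn (fun u : ℝ ↦ M * Real.exp (-ε * u)) (Ioi 0) :=
      (integrableOn_exp_mul_Ioi (by linarith) 0).const_mul M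
    have hi2 : IntegrableOn (fun _ : ℝ ↦ (1 : ℝ)) (Ioc (-1) 1) := by simp
    refine (Integrable.mul_prod hi1 hi2).mono' ?_ ?_
    · refine Measurable.aestronglyMeasurable ?_
      simp only [hG, Function.uncurry_def]
      fun_prop
    · rw [Measure.prod_restrict]
      refine (ae_restrict_iff' (measurableSet_Ioi.prod measurableSet_Ioc)).2
        (Eventually.of_forall ?_)
      rintro ⟨u, t⟩ ⟨hu, ht⟩
      simp only [hG, Function.uncurry_def]
      have e1 : ‖Complex.exp (-ε * u)‖ = Real.exp (-ε * u) := by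
        rw [Complex.norm_exp]; congr 1; simp
      have e2 : ‖Complex.exp (Complex.I * t * (T * (U - u) : ℝ))‖ = 1 := by
        rw [Complex.norm_exp, Real.exp_eq_one_iff]; simp
      have e3 : |1 - (|t|)| ≤ 1 := by
        have : |t| ≤ 1 := abs_le.2 ⟨ht.1.le, ht.2⟩
        rw [abs_of_nonneg (by linarith)]
        linarith [abs_nonneg t]
      rw [norm_mul, norm_mul, norm_mul, e1, e2, Complex.norm_real, Complex.norm_real,
        Real.norm_eq_abs, Real.norm_eq_abs, mul_one]
      gcongr
      exact hM u

/-- The limit `ε → 0` of `laplace_fejer`, using the continuity of `H` up to the line `re z = 0`. -/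
lemma fejer_average_eq {R : ℝ → ℝ} {M : ℝ} (hR : Measurable R) (hM : ∀ u, |R u| ≤ M)
    {H : ℂ → ℂ} (hH : ContinuousOn H {z | 0 ≤ z.re}) (hL : ∀ z : ℂ, 0 < z.re →
      ∫ u in Ioi (0 : ℝ), (R u : ℂ) * Complex.exp (-z * u) = H z)
    {T : ℝ} (hT : 0 < T) (U : ℝ) :
    ((∫ u in Ioi (0 : ℝ), R u * fejer (T * (U - u)) : ℝ) : ℂ) =
      ∫ t in (-1 : ℝ)..1, ((1 - |t| : ℝ) : ℂ) * Complex.exp (Complex.I * t * (T * U : ℝ)) *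
        H (Complex.I * (T * t)) := by
  have hM0 : 0 ≤ M := (abs_nonneg _).trans (hM 0)
  have hl : Tendsto (fun ε : ℝ ↦
      ((∫ u in Ioi (0 : ℝ), R u * Real.exp (-ε * u) * fejer (T * (U - u)) : ℝ) : ℂ))
      (𝓝[>] 0) (𝓝 ((∫ u in Ioi (0 : ℝ), R u * fejer (T * (U - u)) : ℝ) : ℂ)) := by
    refine (Complex.continuous_ofReal.tendsto _).comp ?_
    refine tendsto_integral_filter_of_dominated_convergence
      (fun u ↦ M * fejer (T * (U - u))) ?_ ?_ ?_ ?_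
    · refine Eventually.of_forall fun ε ↦ Measurable.aestronglyMeasurable ?_
      have := continuous_fejer.measurable
      fun_prop
    · filter_upwards [self_mem_nhdsWithin] with ε hε
      refine (ae_restrict_iff' measurableSet_Ioi).2 (Eventually.of_forall fun u hu ↦ ?_)
      have : Real.exp (-ε * u) ≤ 1 := by
        rw [Real.exp_le_one_iff]
        have : 0 < ε * u := mul_pos hε hu
        linarith
      rw [norm_mul, norm_mul, Real.norm_of_nonneg (fejer_nonneg _), Real.norm_eq_abs,
        Real.norm_of_nonneg (Real.exp_pos _).le]
      have := mul_le_mul (hM u) this (Real.exp_pos _).le hM0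
      rw [mul_one] at this
      exact mul_le_mul_of_nonneg_right this (fejer_nonneg _)
    · exact ((integrable_fejer_comp hT U).const_mul M).integrableOn
    · refine Eventually.of_forall fun u ↦ ?_
      have hc : Continuous fun ε : ℝ ↦ R u * Real.exp (-ε * u) * fejer (T * (U - u)) := by
        fun_prop
      have := hc.tendsto 0
      simp only [neg_zero, zero_mul, Real.exp_zero, mul_one] at this
      exact this.mono_left nhdsWithin_le_nhds
  -- `H` is bounded on the compact rectangle that contains all the arguments used.
  obtain ⟨C, hC⟩ : ∃ C, ∀ z ∈ (Icc (0 : ℝ) 1 ×ℂ Icc (-T) T), ‖H z‖ ≤ C := by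
    have hk : IsCompact (Icc (0 : ℝ) 1 ×ℂ Icc (-T) T) := isCompact_Icc.reProdIm isCompact_Icc
    exact hk.exists_bound_of_continuousOn (hH.mono fun z hz ↦ hz.1.1)
  have habs (t : ℝ) (ht : t ∈ Ioc (-1 : ℝ) 1) : |1 - (|t|)| ≤ 1 := by
    have : |t| ≤ 1 := abs_le.2 ⟨ht.1.le, ht.2⟩
    rw [abs_of_nonneg (by linarith)]
    linarith [abs_nonneg t]
  have hr : Tendsto (fun ε : ℝ ↦ ∫ t in (-1 : ℝ)..1, ((1 - |t| : ℝ) : ℂ) *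
      Complex.exp (Complex.I * t * (T * U : ℝ)) * H (ε + Complex.I * (T * t))) (𝓝[>] 0)
      (𝓝 (∫ t in (-1 : ℝ)..1, ((1 - |t| : ℝ) : ℂ) * Complex.exp (Complex.I * t * (T * U : ℝ)) *
        H (Complex.I * (T * t)))) := by
    refine intervalIntegral.tendsto_integral_filter_of_dominated_convergence (fun _ ↦ C)
      ?_ ?_ (by simp) ?_
    · filter_upwards [self_mem_nhdsWithin] with ε hε
      refine Continuous.aestronglyMeasurable ?_
      refine Continuous.mul (by fun_prop) ?_
      refine hH.comp_continuous (by fun_prop) fun t ↦ ?_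
      simpa using (le_of_lt hε)
    · have : Iio (1 : ℝ) ∈ 𝓝[>] (0 : ℝ) := mem_nhdsWithin_of_mem_nhds (Iio_mem_nhds one_pos)
      filter_upwards [self_mem_nhdsWithin, this] with ε hε hε1
      refine Eventually.of_forall fun t ht ↦ ?_
      rw [uIoc_of_le (by norm_num)] at ht
      have e2 : ‖Complex.exp (Complex.I * t * (T * U : ℝ))‖ = 1 := by
        rw [Complex.norm_exp, Real.exp_eq_one_iff]; simp
      rw [norm_mul, norm_mul, e2, Complex.norm_real, Real.norm_eq_abs, mul_one]
      have h3 : ‖H (ε + Complex.I * (T * t))‖ ≤ C := by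
        refine hC _ ⟨?_, ?_⟩
        · simpa using ⟨le_of_lt hε, le_of_lt hε1⟩
        · simp only [mem_preimage, Complex.add_im, Complex.ofReal_im, Complex.mul_im,
            Complex.I_re, Complex.I_im, Complex.ofReal_re, Complex.mul_re, mem_Icc]
          constructor <;> nlinarith [ht.1, ht.2]
      have h0 : 0 ≤ ‖H (ε + Complex.I * (T * t))‖ := norm_nonneg _
      nlinarith [habs t ht, abs_nonneg (1 - |t|)]
    · refine Eventually.of_forall fun t _ ↦ ?_
      refine Tendsto.const_mul _ ?_
      have hz : (Complex.I * (T * t) : ℂ) ∈ {z : ℂ | 0 ≤ z.re} := by simp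
      refine (hH _ hz).tendsto.comp (tendsto_nhdsWithin_iff.2 ⟨?_, ?_⟩)
      · have hc : Continuous fun ε : ℝ ↦ (ε : ℂ) + Complex.I * (T * t) := by fun_prop
        have := hc.tendsto 0
        simp only [Complex.ofReal_zero, zero_add] at this
        exact this.mono_left nhdsWithin_le_nhds
      · filter_upwards [self_mem_nhdsWithin] with ε hε
        simpa using (le_of_lt hε)
  refine tendsto_nhds_unique hl (hr.congr' ?_)
  filter_upwards [self_mem_nhdsWithin] with ε hε
  exact (laplace_fejer hR hM hL T U hε).symm

/-- The Riemann-Lebesgue lemma applied on the line `re z = 0`: the Fejér averages at scale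
`1 / T` of a bounded function whose Laplace transform is continuous up to that line tend to `0`. -/
lemma tendsto_fejer_average {R : ℝ → ℝ} {M : ℝ} (hR : Measurable R) (hM : ∀ u, |R u| ≤ M)
    {H : ℂ → ℂ} (hH : ContinuousOn H {z | 0 ≤ z.re}) (hL : ∀ z : ℂ, 0 < z.re →
      ∫ u in Ioi (0 : ℝ), (R u : ℂ) * Complex.exp (-z * u) = H z)
    {T : ℝ} (hT : 0 < T) :
    Tendsto (fun U ↦ ∫ u in Ioi (0 : ℝ), R u * fejer (T * (U - u))) atTop (𝓝 0) := by
  set f : ℝ → ℂ := indicator (Ioc (-1) 1)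
    (fun t : ℝ ↦ ((1 - |t| : ℝ) : ℂ) * H (Complex.I * (T * t))) with hf
  have hRL := Real.tendsto_integral_exp_smul_cocompact f
  have hw : Tendsto (fun U : ℝ ↦ -(T / (2 * Real.pi)) * U) atTop (cocompact ℝ) := by
    have : Tendsto (fun U : ℝ ↦ -(T / (2 * Real.pi)) * U) atTop atBot :=
      tendsto_id.const_mul_atTop_of_neg (by
        have := Real.pi_pos
        rw [neg_lt_zero]; positivity)
    exact this.mono_right atBot_le_cocompact
  have h := hRL.comp hw
  have h2 : Tendsto (fun U ↦ ((∫ u in Ioi (0 : ℝ), R u * fejer (T * (U - u)) : ℝ) : ℂ))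
      atTop (𝓝 0) := by
    refine h.congr fun U ↦ ?_
    rw [fejer_average_eq hR hM hH hL hT U, intervalIntegral.integral_of_le (by norm_num),
      ← integral_indicator measurableSet_Ioc]
    simp only [Function.comp_def]
    refine integral_congr_ae (Eventually.of_forall fun t ↦ ?_)
    simp only [hf, indicator_apply]
    split_ifs with ht
    · rw [Circle.smul_def, Real.fourierChar_apply, smul_eq_mul]
      have : Complex.exp (2 * Real.pi * (-(t * (-(T / (2 * Real.pi)) * U)) : ℝ) * Complex.I) =
          Complex.exp (Complex.I * t * (T * U : ℝ)) := by
        congr 1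
        have := Real.pi_ne_zero
        push_cast
        field_simp
      push_cast at this ⊢
      rw [this]
      ring
    · simp
  have h3 := (Complex.continuous_re.tendsto _).comp h2
  rw [Complex.zero_re] at h3
  exact h3.congr fun U ↦ Complex.ofReal_re _

/-! ### A Tauberian theorem -/

lemma integrable_fejer_mul {T : ℝ} (hT : 0 < T) : Integrable fun w ↦ fejer (T * w) :=
  integrable_fejer.comp_mul_left' hT.ne'

lemma integral_fejer_mul_pos {T : ℝ} (hT : 0 < T) : 0 < ∫ w, fejer (T * w) := by
  rw [Measure.integral_comp_mul_left, smul_eq_mul]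
  have := integral_fejer_pos
  positivity

/-- At a fine enough scale the Fejér kernel has almost all of its mass in `[-δ, δ]`. -/
lemma exists_fejer_concentrated {δ η : ℝ} (hδ : 0 < δ) (hη : 0 < η) :
    ∃ T > 0, ∫ w, indicator {w | δ < |w|} (fun w ↦ fejer (T * w)) w ≤ η * ∫ w, fejer (T * w) := by
  have hlim : Tendsto (fun T : ℝ ↦ ∫ v, indicator {v | T * δ < |v|} fejer v) atTop (𝓝 0) := by
    rw [← integral_zero ℝ ℝ (μ := volume)]
    refine tendsto_integral_filter_of_dominated_convergence fejer ?_ ?_ integrable_fejer ?_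
    · refine Eventually.of_forall fun T ↦ ?_
      exact (continuous_fejer.measurable.indicator
        (measurableSet_lt measurable_const measurable_norm)).aestronglyMeasurable
    · refine Eventually.of_forall fun T ↦ Eventually.of_forall fun v ↦ ?_
      rw [Real.norm_of_nonneg (indicator_nonneg (fun _ _ ↦ fejer_nonneg _) _)]
      exact indicator_le_self' (fun _ _ ↦ fejer_nonneg _) _
    · refine Eventually.of_forall fun v ↦ tendsto_const_nhds.congr' ?_
      filter_upwards [eventually_ge_atTop (|v| / δ)] with T hT
      rw [indicator_of_notMem]
      rw [mem_setOf_eq, not_lt]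
      exact (div_le_iff₀ hδ).1 hT
  have hpos := mul_pos hη integral_fejer_pos
  obtain ⟨T, hT1, hT2⟩ := ((hlim.eventually (gt_mem_nhds hpos)).and
    (eventually_gt_atTop 0)).exists
  refine ⟨T, hT2, ?_⟩
  have e : (fun w ↦ indicator {w | δ < |w|} (fun w ↦ fejer (T * w)) w) =
      fun w ↦ (fun v ↦ indicator {v | T * δ < |v|} fejer v) (T * w) := by
    ext w
    simp only [indicator_apply, mem_setOf_eq, abs_mul, abs_of_pos hT2,
      mul_lt_mul_iff_right₀ hT2]
  rw [e, Measure.integral_comp_mul_left, Measure.integral_comp_mul_left (fun v ↦ fejer v),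
    smul_eq_mul, smul_eq_mul]
  have : 0 ≤ |T⁻¹| := abs_nonneg _
  nlinarith

lemma tendsto_fejer_halfline {T : ℝ} (hT : 0 < T) :
    Tendsto (fun U ↦ ∫ u in Ioi (0 : ℝ), fejer (T * (U - u))) atTop
      (𝓝 (∫ w, fejer (T * w))) := by
  have e (U : ℝ) : ∫ u in Ioi (0 : ℝ), fejer (T * (U - u)) =
      ∫ w, indicator (Iio U) (fun w ↦ fejer (T * w)) w := by
    rw [← integral_indicator measurableSet_Ioi,
      ← integral_sub_left_eq_self (fun w ↦ indicator (Iio U) (fun w ↦ fejer (T * w)) w) volume U]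
    congr 1
    ext u
    simp [indicator_apply]
  simp_rw [e]
  refine tendsto_integral_filter_of_dominated_convergence (fun w ↦ fejer (T * w)) ?_ ?_
    (integrable_fejer_mul hT) ?_
  · refine Eventually.of_forall fun U ↦ ?_
    exact ((continuous_fejer.measurable.comp (measurable_const_mul T)).indicator
        measurableSet_Iio).aestronglyMeasurable
  · refine Eventually.of_forall fun T ↦ Eventually.of_forall fun v ↦ ?_
    rw [Real.norm_of_nonneg (indicator_nonneg (fun _ _ ↦ fejer_nonneg _) _)]
    exact indicator_le_self' (fun _ _ ↦ fejer_nonneg _) _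
  · refine Eventually.of_forall fun v ↦ tendsto_const_nhds.congr' ?_
    filter_upwards [eventually_gt_atTop v] with U hU
    rw [indicator_of_mem]
    exact hU

/-- A Tauberian theorem of Wiener-Ikehara type, for Laplace transforms: a bounded nonnegative
`B` for which `B u * exp u` is nondecreasing tends to `A` as soon as the Laplace transform of
`B - A` extends continuously to the closed right half plane. -/
theorem tendsto_of_laplace {B : ℝ → ℝ} {M A : ℝ} (hB : Measurable B) (hB0 : ∀ u, 0 ≤ B u)
    (hBM : ∀ u, B u ≤ M) (hA : 0 ≤ A)
    (hmono : ∀ u w, 0 ≤ u → u ≤ w → B u * Real.exp u ≤ B w * Real.exp w)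
    {H : ℂ → ℂ} (hH : ContinuousOn H {z | 0 ≤ z.re}) (hL : ∀ z : ℂ, 0 < z.re →
      ∫ u in Ioi (0 : ℝ), ((B u - A : ℝ) : ℂ) * Complex.exp (-z * u) = H z) :
    Tendsto B atTop (𝓝 A) := by
  have hM0 : 0 ≤ M := (hB0 0).trans (hBM 0)
  have hBle {u w : ℝ} (hu : 0 ≤ u) (huw : u ≤ w) : B u ≤ B w * Real.exp (w - u) := by
    have := hmono u w hu huw
    rw [Real.exp_sub, mul_div_assoc', le_div_iff₀ (Real.exp_pos u)]
    exact this
  have hint {T : ℝ} (hT : 0 < T) (U : ℝ) :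
      Integrable fun u ↦ B u * fejer (T * (U - u)) := by
    refine ((integrable_fejer_comp hT U).const_mul M).mono' ?_ ?_
    · have := continuous_fejer.measurable
      exact Measurable.aestronglyMeasurable (by fun_prop)
    · refine Eventually.of_forall fun u ↦ ?_
      rw [Real.norm_of_nonneg (mul_nonneg (hB0 u) (fejer_nonneg _))]
      exact mul_le_mul_of_nonneg_right (hBM u) (fejer_nonneg _)
  have hI {T : ℝ} (hT : 0 < T) : Tendsto (fun U ↦ ∫ u in Ioi (0 : ℝ), B u * fejer (T * (U - u)))
      atTop (𝓝 (A * ∫ w, fejer (T * w))) := by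
    have h1 := tendsto_fejer_average (R := fun u ↦ B u - A) (M := M + A) (by fun_prop)
      (fun u ↦ by rw [abs_le]; constructor <;> linarith [hB0 u, hBM u]) hH hL hT
    have h2 := h1.add ((tendsto_fejer_halfline hT).const_mul A)
    rw [zero_add] at h2
    refine h2.congr fun U ↦ ?_
    rw [← integral_const_mul, ← integral_add]
    · congr 1; ext u; ring
    · have := ((hint hT U).sub ((integrable_fejer_comp hT U).const_mul A)).integrableOn
        (s := Ioi 0)
      refine this.congr (Eventually.of_forall fun u ↦ ?_)
      simp only [Pi.sub_apply]; ring
    · exact ((integrable_fejer_comp hT U).const_mul A).integrableOn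
  -- `B u * exp u` is nondecreasing, so a large `B U` keeps `B` large on `[U, U + 2δ]`
  have hup {δ : ℝ} (hδ : 0 < δ) (hδ1 : δ < 1) :
      ∀ᶠ U in atTop, B U * Real.exp (-(2 * δ)) * (1 - δ) ≤ A + δ := by
    obtain ⟨T, hT, hconc⟩ := exists_fejer_concentrated hδ hδ
    have hc := integral_fejer_mul_pos hT
    set c := ∫ w, fejer (T * w)
    have hlim := (hI hT).comp (tendsto_atTop_add_const_right atTop δ tendsto_id)
    have : A * c < (A + δ) * c := by nlinarith
    filter_upwards [hlim.eventually (gt_mem_nhds this), eventually_gt_atTop 0] with U hU hU0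
    simp only [Function.comp_apply, id] at hU
    have h1 : B U * Real.exp (-(2 * δ)) * (c - ∫ w, indicator {w | δ < |w|}
        (fun w ↦ fejer (T * w)) w) ≤ ∫ u in Ioi (0 : ℝ), B u * fejer (T * (U + δ - u)) := by
      have hi : Integrable (indicator {w | δ < |w|} (fun w ↦ fejer (T * w))) :=
        (integrable_fejer_mul hT).indicator (measurableSet_lt measurable_const measurable_norm)
      rw [← integral_sub (integrable_fejer_mul hT) hi,
        ← integral_sub_left_eq_self _ volume (U + δ), ← integral_const_mul,
        ← integral_indicator measurableSet_Ioi]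
      refine integral_mono ?_ ((hint hT (U + δ)).indicator measurableSet_Ioi) fun u ↦ ?_
      · exact (((integrable_fejer_mul hT).sub hi).comp_sub_left (U + δ)).const_mul _
      · simp only [indicator_apply, mem_setOf_eq, mem_Ioi]
        by_cases h : δ < |U + δ - u|
        · rw [if_pos h, sub_self, mul_zero]
          split_ifs
          · exact mul_nonneg (hB0 u) (fejer_nonneg _)
          · exact le_rfl
        · rw [if_neg h, sub_zero]
          rw [not_lt, abs_le] at h
          rw [if_pos (by linarith)]
          refine mul_le_mul_of_nonneg_right ?_ (fejer_nonneg _)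
          have h3 := hBle hU0.le (show U ≤ u by linarith)
          have h4 : Real.exp (u - U) ≤ Real.exp (2 * δ) := Real.exp_le_exp.2 (by linarith)
          rw [Real.exp_neg, ← div_eq_mul_inv, div_le_iff₀ (Real.exp_pos _)]
          exact h3.trans (mul_le_mul_of_nonneg_left h4 (hB0 u))
    have h2 : B U * Real.exp (-(2 * δ)) * ((1 - δ) * c) ≤ (A + δ) * c := by
      refine le_trans (mul_le_mul_of_nonneg_left ?_ (mul_nonneg (hB0 U) (Real.exp_pos _).le))
        (h1.trans hU.le)
      linarith
    rw [← mul_assoc] at h2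
    exact le_of_mul_le_mul_right h2 hc
  -- likewise a small `B U` keeps `B` small on `[U - 2δ, U]`
  have hlow {δ : ℝ} (hδ : 0 < δ) :
      ∀ᶠ U in atTop, A - δ ≤ B U * Real.exp (2 * δ) + M * δ := by
    obtain ⟨T, hT, hconc⟩ := exists_fejer_concentrated hδ hδ
    have hc := integral_fejer_mul_pos hT
    set c := ∫ w, fejer (T * w)
    have hlim := (hI hT).comp (tendsto_atTop_add_const_right atTop (-δ) tendsto_id)
    have : (A - δ) * c < A * c := by nlinarith
    filter_upwards [hlim.eventually (lt_mem_nhds this), eventually_gt_atTop (2 * δ)] with U hU hU0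
    simp only [Function.comp_apply, id] at hU
    have h1 : ∫ u in Ioi (0 : ℝ), B u * fejer (T * (U + -δ - u)) ≤
        B U * Real.exp (2 * δ) * c + M * ∫ w, indicator {w | δ < |w|}
          (fun w ↦ fejer (T * w)) w := by
      have hi : Integrable (indicator {w | δ < |w|} (fun w ↦ fejer (T * w))) :=
        (integrable_fejer_mul hT).indicator (measurableSet_lt measurable_const measurable_norm)
      rw [← integral_const_mul, ← integral_const_mul,
        ← integral_add ((integrable_fejer_mul hT).const_mul _) (hi.const_mul _),
        ← integral_sub_left_eq_self _ volume (U + -δ),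
        ← integral_indicator measurableSet_Ioi]
      refine integral_mono ((hint hT (U + -δ)).indicator measurableSet_Ioi) ?_ fun u ↦ ?_
      · exact ((((integrable_fejer_mul hT).const_mul _).add (hi.const_mul _)).comp_sub_left
          (U + -δ))
      · simp only [indicator_apply, mem_setOf_eq, mem_Ioi]
        have hf := fejer_nonneg (T * (U + -δ - u))
        have hBe : 0 ≤ B U * Real.exp (2 * δ) := mul_nonneg (hB0 U) (Real.exp_pos _).le
        by_cases h : δ < |U + -δ - u|
        · rw [if_pos h]
          split_ifs
          · nlinarith [hBM u]
          · positivity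
        · rw [if_neg h, mul_zero, add_zero]
          rw [not_lt, abs_le] at h
          split_ifs with h0
          · refine mul_le_mul_of_nonneg_right ?_ hf
            have h3 := hBle h0.le (show u ≤ U by linarith)
            have h4 : Real.exp (U - u) ≤ Real.exp (2 * δ) := Real.exp_le_exp.2 (by linarith)
            exact h3.trans (mul_le_mul_of_nonneg_left h4 (hB0 U))
          · positivity
    have h2 : (A - δ) * c ≤ (B U * Real.exp (2 * δ) + M * δ) * c := by
      refine (hU.le.trans h1).trans ?_
      have := mul_le_mul_of_nonneg_left hconc hM0
      linarith
    exact le_of_mul_le_mul_right h2 hc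
  rw [tendsto_order]
  constructor
  · intro a ha
    have hcont : Continuous fun δ : ℝ ↦ (A - δ - M * δ) - a * Real.exp (2 * δ) := by fun_prop
    have h0 : 0 < (A - 0 - M * 0) - a * Real.exp (2 * 0) := by simpa using ha
    have h1 := (hcont.tendsto 0).eventually (lt_mem_nhds h0)
    obtain ⟨δ, hδ1, hδ⟩ := ((h1.filter_mono nhdsWithin_le_nhds).and
      (self_mem_nhdsWithin (s := Ioi (0 : ℝ)))).exists
    filter_upwards [hlow hδ] with U hU
    have : a * Real.exp (2 * δ) < B U * Real.exp (2 * δ) := by linarith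
    exact lt_of_mul_lt_mul_right this (Real.exp_pos _).le
  · intro a ha
    have hcont : Continuous fun δ : ℝ ↦ a * Real.exp (-(2 * δ)) * (1 - δ) - (A + δ) := by
      fun_prop
    have h0 : 0 < a * Real.exp (-(2 * 0)) * (1 - 0) - (A + 0) := by simpa using ha
    have h1 := (hcont.tendsto 0).eventually (lt_mem_nhds h0)
    obtain ⟨δ, ⟨hδ1, hδ2⟩, hδ⟩ := (((h1.and (gt_mem_nhds one_pos)).filter_mono
      nhdsWithin_le_nhds).and (self_mem_nhdsWithin (s := Ioi (0 : ℝ)))).exists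
    filter_upwards [hup hδ hδ2] with U hU
    have h5 : 0 < Real.exp (-(2 * δ)) * (1 - δ) := mul_pos (Real.exp_pos _) (by linarith)
    have : B U * (Real.exp (-(2 * δ)) * (1 - δ)) < a * (Real.exp (-(2 * δ)) * (1 - δ)) := by
      linarith
    exact lt_of_mul_lt_mul_right this h5.le

/-! ### The prime number theorem for the progression `1` modulo `4` -/

/-- The von Mangoldt function restricted to the residue class `1` modulo `4`. -/
noncomputable def mangoldtOne (n : ℕ) : ℝ := vonMangoldt.residueClass (1 : ZMod 4) n

lemma mangoldtOne_nonneg (n : ℕ) : 0 ≤ mangoldtOne n := vonMangoldt.residueClass_nonneg _ _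

lemma mangoldtOne_le (n : ℕ) : mangoldtOne n ≤ vonMangoldt n := vonMangoldt.residueClass_le _ _

/-- The Chebyshev function of the progression `1` modulo `4`. -/
noncomputable def psiOne (n : ℕ) : ℝ := ∑ k ∈ Finset.Icc 1 n, mangoldtOne k

lemma psiOne_nonneg (n : ℕ) : 0 ≤ psiOne n := Finset.sum_nonneg fun _ _ ↦ mangoldtOne_nonneg _

lemma psiOne_mono : Monotone psiOne := fun _ _ h ↦
  Finset.sum_le_sum_of_subset_of_nonneg (Finset.Icc_subset_Icc_right h)
    fun _ _ _ ↦ mangoldtOne_nonneg _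

lemma psiOne_floor_le {x : ℝ} (hx : 0 ≤ x) : psiOne ⌊x⌋₊ ≤ (Real.log 4 + 4) * x :=
  (Finset.sum_le_sum fun k _ ↦ mangoldtOne_le k).trans (Chebyshev.psi_le_const_mul_self hx)

lemma psiOne_le (n : ℕ) : psiOne n ≤ (Real.log 4 + 4) * n := by
  simpa using psiOne_floor_le (Nat.cast_nonneg (α := ℝ) n)

/-- The normalised Chebyshev function of the progression `1` modulo `4`, in the variable
`u = log x`. -/
noncomputable def psiNorm (u : ℝ) : ℝ := psiOne ⌊Real.exp u⌋₊ * Real.exp (-u)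

lemma psiNorm_nonneg (u : ℝ) : 0 ≤ psiNorm u :=
  mul_nonneg (psiOne_nonneg _) (Real.exp_pos _).le

lemma psiNorm_le (u : ℝ) : psiNorm u ≤ Real.log 4 + 4 := by
  have := psiOne_floor_le (Real.exp_pos u).le
  rw [psiNorm, Real.exp_neg, ← div_eq_mul_inv, div_le_iff₀ (Real.exp_pos _)]
  exact this

lemma measurable_psiNorm : Measurable psiNorm := by
  have h : Measurable psiOne := measurable_from_top
  have h2 : Measurable fun u : ℝ ↦ ⌊Real.exp u⌋₊ := Nat.measurable_floor.comp Real.measurable_exp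
  exact (h.comp h2).mul (by fun_prop)

lemma exp_image_Ioi : Real.exp '' Ioi (0 : ℝ) = Ioi 1 := by
  ext x
  simp only [mem_image, mem_Ioi]
  constructor
  · rintro ⟨u, hu, rfl⟩
    exact Real.one_lt_exp_iff.2 hu
  · intro hx
    exact ⟨Real.log x, Real.log_pos hx, Real.exp_log (by linarith)⟩

/-- Summation by parts, after the change of variables `x = exp u`. -/
lemma laplace_psiNorm {z : ℂ} (hz : 0 < z.re) :
    LSeries (fun n ↦ (mangoldtOne n : ℂ)) (1 + z) =
      (1 + z) * ∫ u in Ioi (0 : ℝ), (psiNorm u : ℂ) * Complex.exp (-z * u) := by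
  rw [LSeries_eq_mul_integral_of_nonneg mangoldtOne zero_le_one (by simpa using hz) ?_
    mangoldtOne_nonneg]
  · congr 1
    rw [← exp_image_Ioi, integral_image_eq_integral_abs_deriv_smul measurableSet_Ioi
      (fun x _ ↦ (Real.hasDerivAt_exp x).hasDerivWithinAt) Real.exp_injective.injOn]
    refine setIntegral_congr_fun measurableSet_Ioi fun u _ ↦ ?_
    simp only [psiNorm, psiOne]
    rw [abs_of_pos (Real.exp_pos u), Complex.real_smul,
      Complex.cpow_def_of_ne_zero (by exact_mod_cast (Real.exp_pos u).ne'),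
      ← Complex.ofReal_log (Real.exp_pos u).le, Real.log_exp]
    push_cast
    rw [mul_left_comm, ← Complex.exp_add, mul_assoc, ← Complex.exp_add]
    congr 2
    ring
  · refine Asymptotics.IsBigO.of_bound (Real.log 4 + 4) (Eventually.of_forall fun n ↦ ?_)
    change ‖psiOne n‖ ≤ _
    rw [Real.norm_of_nonneg (psiOne_nonneg n), Real.rpow_one, Real.norm_natCast]
    exact psiOne_le n

/-- The prime number theorem for the progression `1` modulo `4`. -/
theorem tendsto_psiNorm : Tendsto psiNorm atTop (𝓝 (1 / 2)) := by
  have hunit : IsUnit (1 : ZMod 4) := isUnit_one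
  set G := vonMangoldt.LFunctionResidueClassAux (1 : ZMod 4)
  refine tendsto_of_laplace (M := Real.log 4 + 4) (H := fun z ↦ (G (1 + z) - 1 / 2) / (1 + z))
    measurable_psiNorm psiNorm_nonneg psiNorm_le (by norm_num) ?_ ?_ ?_
  · intro u w _ huw
    have e (v : ℝ) : psiNorm v * Real.exp v = psiOne ⌊Real.exp v⌋₊ := by
      rw [psiNorm, mul_assoc, ← Real.exp_add]; simp
    rw [e, e]
    exact psiOne_mono (Nat.floor_mono (Real.exp_le_exp.2 huw))
  · refine ContinuousOn.div ?_ (by fun_prop) ?_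
    · refine ContinuousOn.sub ?_ continuousOn_const
      refine (vonMangoldt.continuousOn_LFunctionResidueClassAux (1 : ZMod 4)).comp
        (by fun_prop) ?_
      intro z hz
      simpa using hz
    · intro z hz h
      have := congrArg Complex.re h
      simp only [mem_ofPred_eq] at hz
      simp at this
      linarith
  · intro z hz
    have hz0 : z ≠ 0 := by rintro rfl; simp at hz
    have hz1 : 1 + z ≠ 0 := by
      intro h
      have := congrArg Complex.re h
      simp at this
      linarith
    have hG := vonMangoldt.eqOn_LFunctionResidueClassAux hunit
      (show 1 + z ∈ {s : ℂ | 1 < s.re} by simpa using hz)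
    have hL := laplace_psiNorm hz
    have hexp : IntegrableOn (fun u : ℝ ↦ Complex.exp (-z * u)) (Ioi 0) :=
      integrableOn_exp_mul_complex_Ioi (by simpa using hz) 0
    have hexpI : ∫ u in Ioi (0 : ℝ), Complex.exp (-z * u) = 1 / z := by
      rw [integral_exp_mul_complex_Ioi (by simpa using hz)]
      simp [neg_div_neg_eq]
    have hB : IntegrableOn (fun u : ℝ ↦ (psiNorm u : ℂ) * Complex.exp (-z * u)) (Ioi 0) := by
      refine hexp.bdd_mul (c := Real.log 4 + 4) ?_ (Eventually.of_forall fun u ↦ ?_)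
      · exact (Complex.measurable_ofReal.comp measurable_psiNorm).aestronglyMeasurable
      · rw [Complex.norm_real, Real.norm_of_nonneg (psiNorm_nonneg u)]
        exact psiNorm_le u
    have htot : Nat.totient 4 = 2 := by decide
    simp only [htot] at hG
    push_cast
    simp_rw [sub_mul]
    rw [integral_sub hB (hexp.const_mul _), integral_const_mul, hexpI]
    change G (1 + z) = LSeries (fun n ↦ (mangoldtOne n : ℂ)) (1 + z) - _ at hG
    rw [hG, hL]
    simp only [add_sub_cancel_left]
    field_simp
    ring

/-- The prime number theorem for the progression `1` modulo `4`, in terms of integers. -/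
theorem tendsto_psiOne_div : Tendsto (fun n : ℕ ↦ psiOne n / n) atTop (𝓝 (1 / 2)) := by
  have h := tendsto_psiNorm.comp (Real.tendsto_log_atTop.comp tendsto_natCast_atTop_atTop)
  refine h.congr' ?_
  filter_upwards [eventually_gt_atTop 0] with n hn
  have hn' : (0 : ℝ) < n := by exact_mod_cast hn
  simp only [Function.comp_apply, psiNorm]
  rw [Real.exp_neg, Real.exp_log hn', Nat.floor_natCast, div_eq_mul_inv]

/-! ### Divergence of the sum of reciprocals of the primes `1` modulo `4` -/

lemma mangoldtOne_of_prime {p : ℕ} (hp : p.Prime) (h : p % 4 = 1) :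
    mangoldtOne p = Real.log p := by
  have : (p : ZMod 4) = 1 := by
    have := (ZMod.natCast_eq_natCast_iff p 1 4).2 h
    simpa using this
  simp [mangoldtOne, vonMangoldt.residueClass, this, vonMangoldt_apply_prime hp]

lemma mangoldtOne_of_ne {p : ℕ} (h : p % 4 ≠ 1) : mangoldtOne p = 0 := by
  have : (p : ZMod 4) ≠ 1 := by
    intro h1
    exact h ((ZMod.natCast_eq_natCast_iff p 1 4).1 (by simpa using h1))
  simp [mangoldtOne, vonMangoldt.residueClass, this]

/-- The primes congruent to `1` modulo `4` have a divergent sum of reciprocals: the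
logarithmic weight in the Dirichlet theorem is removed by `log p ≤ p ^ δ / δ`. -/
theorem not_summable_one_div_primes :
    ¬ Summable fun p : ℕ ↦ if p.Prime ∧ p % 4 = 1 then (1 / p : ℝ) else 0 := by
  intro hs
  set r : ℕ → ℝ := fun p ↦ if p.Prime ∧ p % 4 = 1 then (1 / p : ℝ) else 0 with hr
  have hr0 (n : ℕ) : 0 ≤ r n := by
    simp only [hr]; split_ifs <;> positivity
  obtain ⟨C, hC⟩ := vonMangoldt.LSeries_residueClass_lower_bound (isUnit_one (M := ZMod 4))
  have hnp := vonMangoldt.summable_residueClass_non_primes_div (1 : ZMod 4)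
  set w : ℕ → ℝ := fun n ↦ (if n.Prime then 0 else mangoldtOne n) / n with hw
  change Summable w at hnp
  have hw0 (n : ℕ) : 0 ≤ w n := by
    simp only [hw]
    have := mangoldtOne_nonneg n
    split_ifs <;> positivity
  obtain ⟨y, hy⟩ : ∃ y : ℕ, ∑' n, r (n + y) ≤ 1 / 4 :=
    ((tendsto_sum_nat_add r).eventually (ge_mem_nhds (by norm_num : (0 : ℝ) < 1 / 4))).exists
  set K : ℝ := C + ∑' n, w n + ∑ n ∈ Finset.range y, mangoldtOne n / n
  -- the bound `1 / (2 δ) ≤ K + 1 / (4 δ)` is contradictory for small `δ`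
  have key {δ : ℝ} (hδ : 0 < δ) (hδ1 : δ ≤ 1) : 1 / (4 * δ) ≤ K := by
    have h1 := hC (x := 1 + δ) ⟨by linarith, by linarith⟩
    set q : ℕ → ℝ := fun n ↦ if n < y then mangoldtOne n / n else 0 with hq
    set r' : ℕ → ℝ := fun n ↦ if n < y then 0 else r n with hr'
    have hqs : HasSum q (∑ n ∈ Finset.range y, mangoldtOne n / n) := by
      have := hasSum_sum_of_ne_finset_zero (f := q) (s := Finset.range y) (L := .unconditional ℕ) (by
        intro n hn
        simp only [Finset.mem_range] at hn
        simp [hq, hn])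
      rwa [Finset.sum_congr rfl (g := fun n ↦ mangoldtOne n / n)] at this
      intro n hn
      simp only [Finset.mem_range] at hn
      simp [hq, hn]
    have hr's : Summable r' := by
      refine Summable.of_nonneg_of_le (fun n ↦ ?_) (fun n ↦ ?_) hs
      · simp only [hr']; split_ifs; exacts [le_rfl, hr0 n]
      · simp only [hr']; split_ifs; exacts [hr0 n, le_rfl]
    have hr't : ∑' n, r' n ≤ 1 / 4 := by
      rw [← hr's.sum_add_tsum_nat_add y]
      have e1 : ∑ n ∈ Finset.range y, r' n = 0 := Finset.sum_eq_zero fun n hn ↦ by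
        simp only [Finset.mem_range] at hn
        simp [hr', hn]
      have e2 : ∀ n, r' (n + y) = r (n + y) := fun n ↦ by simp [hr']
      simp_rw [e1, e2, zero_add]
      exact hy
    have hle (n : ℕ) : mangoldtOne n / (n : ℝ) ^ (1 + δ) ≤ w n + q n + 1 / δ * r' n := by
      have hq0 : 0 ≤ q n := by
        simp only [hq]
        have := mangoldtOne_nonneg n
        split_ifs <;> positivity
      have hr'0 : 0 ≤ 1 / δ * r' n := by
        have := hr0 n
        simp only [hr']
        split_ifs <;> positivity
      rcases Nat.eq_zero_or_pos n with rfl | hn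
      · have : mangoldtOne 0 = 0 := vonMangoldt.residueClass_apply_zero _
        rw [this, zero_div]
        have := hw0 0
        linarith
      have hn1 : (1 : ℝ) ≤ n := by exact_mod_cast hn
      have hb : mangoldtOne n / (n : ℝ) ^ (1 + δ) ≤ mangoldtOne n / n := by
        refine div_le_div_of_nonneg_left (mangoldtOne_nonneg n) (by linarith) ?_
        calc (n : ℝ) = (n : ℝ) ^ (1 : ℝ) := (Real.rpow_one _).symm
          _ ≤ _ := Real.rpow_le_rpow_of_exponent_le hn1 (by linarith)
      by_cases hp : n.Prime
      · by_cases hny : n < y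
        · have : q n = mangoldtOne n / n := by simp [hq, hny]
          linarith [hw0 n]
        · by_cases h4 : n % 4 = 1
          · have e : r' n = 1 / n := by simp [hr', hr, hny, hp, h4]
            rw [e, mangoldtOne_of_prime hp h4]
            have := Real.log_le_rpow_div (by linarith : (0 : ℝ) ≤ n) hδ
            have h3 : Real.log n / (n : ℝ) ^ (1 + δ) ≤ 1 / δ * (1 / n) := by
              rw [Real.rpow_add (by linarith), Real.rpow_one, div_le_iff₀ (by positivity)]
              have e2 : 1 / δ * (1 / (n : ℝ)) * (n * (n : ℝ) ^ δ) = (n : ℝ) ^ δ / δ := by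
                field_simp
              rwa [e2]
            linarith [hw0 n]
          · rw [mangoldtOne_of_ne h4, zero_div]
            linarith [hw0 n]
      · have : w n = mangoldtOne n / n := by simp [hw, hp]
        linarith
    have hsum : Summable fun n ↦ w n + q n + 1 / δ * r' n :=
      (hnp.add hqs.summable).add (hr's.mul_left _)
    have hs2 : Summable fun n : ℕ ↦ mangoldtOne n / (n : ℝ) ^ (1 + δ) :=
      Summable.of_nonneg_of_le (fun n ↦ by have := mangoldtOne_nonneg n; positivity) hle hsum
    have h2 := hs2.tsum_le_tsum hle hsum
    rw [(hnp.add hqs.summable).tsum_add (hr's.mul_left _), hnp.tsum_add hqs.summable, hqs.tsum_eq,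
      tsum_mul_left] at h2
    have htot : Nat.totient 4 = 2 := by decide
    change _ ≤ ∑' n, mangoldtOne n / (n : ℝ) ^ (1 + δ) at h1
    rw [htot] at h1
    have h3 : 1 / δ * ∑' n, r' n ≤ 1 / δ * (1 / 4) :=
      mul_le_mul_of_nonneg_left hr't (by positivity)
    have e1 : ((2 : ℕ) : ℝ)⁻¹ / (1 + δ - 1) = 2 * (1 / (4 * δ)) := by
      rw [add_sub_cancel_left]; field_simp; norm_num
    have e2 : 1 / δ * (1 / 4) = 1 / (4 * δ) := by field_simp
    rw [e1] at h1
    rw [e2] at h3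
    simp only [K]
    linarith
  have hK : 0 ≤ K := le_trans (by norm_num) (key one_pos le_rfl)
  have := key (δ := 1 / (4 * (K + 1))) (by positivity) (by
    rw [div_le_one (by positivity)]; linarith)
  have e : 1 / (4 * (1 / (4 * (K + 1)))) = K + 1 := by field_simp
  rw [e] at this
  linarith

/-! ### Sums of two squares and divisibility -/

lemma isSumTwoSquares_iff {n : ℕ} (hn : n ≠ 0) :
    IsSumTwoSquares n ↔ ∀ q, q.Prime → q % 4 = 3 → Even (n.factorization q) := by
  have h1 : IsSumTwoSquares n ↔ ∃ x y : ℕ, n = x ^ 2 + y ^ 2 := by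
    constructor
    · rintro ⟨a, b, h⟩
      refine ⟨a.natAbs, b.natAbs, ?_⟩
      zify
      simpa using h
    · rintro ⟨a, b, h⟩
      exact ⟨a, b, by exact_mod_cast h⟩
  rw [h1, Nat.eq_sq_add_sq_iff]
  constructor
  · intro h q hq h4
    by_cases hm : q ∈ n.primeFactors
    · rw [Nat.factorization_def n hq]
      exact h q hm h4
    · have : n.factorization q = 0 := by
        rw [← Finsupp.notMem_support_iff, Nat.support_factorization]
        exact hm
      simp [this]
  · intro h q hq h4
    have hq' := Nat.prime_of_mem_primeFactors hq
    rw [← Nat.factorization_def n hq']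
    exact h q hq' h4

/-- The least sum of two squares that is a multiple of `d`: the exponents of the primes
`p ≡ 3 mod 4` are rounded up to even numbers. -/
noncomputable def lift (d : ℕ) : ℕ :=
  ∏ p ∈ d.primeFactors,
    p ^ (d.factorization p + if p % 4 = 3 ∧ Odd (d.factorization p) then 1 else 0)

lemma lift_ne_zero (d : ℕ) : lift d ≠ 0 :=
  Finset.prod_ne_zero_iff.2 fun _ hp ↦ pow_ne_zero _ (Nat.prime_of_mem_primeFactors hp).ne_zero

lemma lift_pos (d : ℕ) : 0 < lift d := Nat.pos_of_ne_zero (lift_ne_zero d)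

lemma factorization_lift (d p : ℕ) : (lift d).factorization p =
    d.factorization p + if p % 4 = 3 ∧ Odd (d.factorization p) then 1 else 0 := by
  set f : ℕ →₀ ℕ := Finsupp.onFinset d.primeFactors (fun p ↦ d.factorization p +
    if p % 4 = 3 ∧ Odd (d.factorization p) then 1 else 0) (by
      intro a ha
      rw [← Nat.support_factorization, Finsupp.mem_support_iff]
      intro h0
      simp [h0] at ha) with hf
  have hfs : f.support ⊆ d.primeFactors := Finsupp.support_onFinset_subset
  have h1 : lift d = f.prod (· ^ ·) := by
    rw [Finsupp.prod_of_support_subset f hfs _ (fun _ _ ↦ pow_zero _)]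
    rfl
  rw [h1, Nat.prod_pow_factorization_eq_self
    (fun p hp ↦ Nat.prime_of_mem_primeFactors (hfs hp))]
  rfl

lemma dvd_lift {d : ℕ} (hd : d ≠ 0) : d ∣ lift d := by
  rw [← Nat.factorization_le_iff_dvd hd (lift_ne_zero d)]
  intro p
  rw [factorization_lift]
  exact Nat.le_add_right _ _

lemma le_lift (d : ℕ) : d ≤ lift d := by
  rcases eq_or_ne d 0 with rfl | hd
  · exact Nat.zero_le _
  · exact Nat.le_of_dvd (lift_pos d) (dvd_lift hd)

lemma coprime_lift {d k : ℕ} (h : d.Coprime k) : (lift d).Coprime k :=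
  Nat.Coprime.prod_left fun _ hp ↦
    Nat.Coprime.pow_left _ (h.coprime_dvd_left (Nat.dvd_of_mem_primeFactors hp))

lemma lift_prime {p : ℕ} (hp : p.Prime) (h : p % 4 ≠ 3) : lift p = p := by
  simp [lift, hp.primeFactors, h, hp.factorization]

lemma lift_prime_three {p : ℕ} (hp : p.Prime) (h : p % 4 = 3) : lift p = p ^ 2 := by
  simp [lift, hp.primeFactors, h, hp.factorization]

/-- The multiples of `d` that are sums of two squares are the products of `lift d` with a
sum of two squares. -/
lemma isSumTwoSquares_mul_lift {d m : ℕ} (hm : m ≠ 0) :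
    IsSumTwoSquares (lift d * m) ↔ IsSumTwoSquares m := by
  rw [isSumTwoSquares_iff (mul_ne_zero (lift_ne_zero d) hm), isSumTwoSquares_iff hm]
  refine forall_congr' fun q ↦ forall_congr' fun hq ↦ forall_congr' fun h4 ↦ ?_
  have he : Even ((lift d).factorization q) := by
    rw [factorization_lift]
    by_cases h : Odd (d.factorization q)
    · simp only [h4, h, and_self, if_true]
      exact h.add_one
    · simp only [h, and_false, if_false, add_zero]
      exact Nat.not_odd_iff_even.1 h
  rw [Nat.factorization_mul (lift_ne_zero d) hm, Finsupp.add_apply, Nat.even_add]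
  simp [he]

lemma lift_dvd {d n : ℕ} (hd : d ≠ 0) (hn : n ≠ 0) (hS : IsSumTwoSquares n) (h : d ∣ n) :
    lift d ∣ n := by
  rw [← Nat.factorization_le_iff_dvd (lift_ne_zero d) hn]
  intro p
  have h1 := (Nat.factorization_le_iff_dvd hd hn).2 h p
  rw [factorization_lift]
  split_ifs with hp
  · have hpp : p.Prime := by
      by_contra hc
      rw [Nat.factorization_eq_zero_of_not_prime _ hc] at hp
      exact absurd hp.2 (by decide)
    have h2 := (isSumTwoSquares_iff hn).1 hS p hpp hp.1
    refine Nat.lt_of_le_of_ne h1 fun h3 ↦ ?_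
    rw [← h3] at h2
    exact (Nat.not_even_iff_odd.2 hp.2) h2
  · exact h1

open Classical in
/-- The sums of two squares in `[1, N]`. -/
noncomputable def sos (N : ℕ) : Finset ℕ := (Finset.Icc 1 N).filter IsSumTwoSquares

lemma mem_sos {N n : ℕ} : n ∈ sos N ↔ (1 ≤ n ∧ n ≤ N) ∧ IsSumTwoSquares n := by
  simp [sos]

/-- The number of sums of two squares in `[1, N]`. -/
noncomputable def cnt (N : ℕ) : ℝ := (sos N).card

lemma sos_mono {M N : ℕ} (h : M ≤ N) : sos M ⊆ sos N := by
  intro n hn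
  rw [mem_sos] at hn ⊢
  exact ⟨⟨hn.1.1, hn.1.2.trans h⟩, hn.2⟩

lemma cnt_nonneg (N : ℕ) : 0 ≤ cnt N := Nat.cast_nonneg _

lemma cnt_mono : Monotone cnt := fun _ _ h ↦ by
  exact Nat.cast_le.2 (Finset.card_le_card (sos_mono h))

lemma cnt_zero : cnt 0 = 0 := by
  simp [cnt, sos]

lemma cnt_le (N : ℕ) : cnt N ≤ N := by
  have := Finset.card_le_card (s := sos N) (t := Finset.Icc 1 N)
    fun n hn ↦ Finset.mem_Icc.2 (mem_sos.1 hn).1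
  rw [Nat.card_Icc, Nat.add_sub_cancel] at this
  exact Nat.cast_le.2 this

lemma one_mem_sos {N : ℕ} (h : 1 ≤ N) : 1 ∈ sos N := mem_sos.2 ⟨⟨le_rfl, h⟩, 1, 0, by norm_num⟩

lemma cnt_pos {N : ℕ} (h : 1 ≤ N) : 0 < cnt N :=
  Nat.cast_pos.2 (Finset.card_pos.2 ⟨1, one_mem_sos h⟩)

/-- The multiples of `d` among the sums of two squares correspond to the sums of two squares up to
`N / lift d`. -/
lemma filter_dvd_sos {d : ℕ} (hd : d ≠ 0) (N : ℕ) :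
    (sos N).filter (d ∣ ·) = (sos (N / lift d)).image (lift d * ·) := by
  ext n
  simp only [Finset.mem_filter, Finset.mem_image, mem_sos]
  constructor
  · rintro ⟨⟨⟨h1, h2⟩, hS⟩, hdn⟩
    have hn : n ≠ 0 := by omega
    obtain ⟨m, rfl⟩ := lift_dvd hd hn hS hdn
    have hm : m ≠ 0 := right_ne_zero_of_mul hn
    refine ⟨m, ⟨⟨Nat.pos_of_ne_zero hm, ?_⟩, (isSumTwoSquares_mul_lift hm).1 hS⟩, rfl⟩
    rwa [Nat.le_div_iff_mul_le (lift_pos d), mul_comm]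
  · rintro ⟨m, ⟨⟨h1, h2⟩, hS⟩, rfl⟩
    rw [Nat.le_div_iff_mul_le (lift_pos d), mul_comm] at h2
    exact ⟨⟨⟨Nat.mul_pos (lift_pos d) h1, h2⟩, (isSumTwoSquares_mul_lift (by omega)).2 hS⟩,
      (dvd_lift hd).mul_right m⟩

lemma sum_filter_dvd_sos {d : ℕ} (hd : d ≠ 0) (N : ℕ) (g : ℕ → ℝ) :
    ∑ n ∈ (sos N).filter (d ∣ ·), g n = ∑ m ∈ sos (N / lift d), g (lift d * m) := by
  rw [filter_dvd_sos hd, Finset.sum_image]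
  intro a _ b _ h
  exact Nat.eq_of_mul_eq_mul_left (lift_pos d) h

lemma card_filter_dvd_sos {d : ℕ} (hd : d ≠ 0) (N : ℕ) :
    (((sos N).filter (d ∣ ·)).card : ℝ) = cnt (N / lift d) := by
  have := sum_filter_dvd_sos hd N (fun _ ↦ 1)
  simpa [cnt] using this

/-! ### Regular variation of the counting function -/

/-- Interchange of summation for divisor sums over the sums of two squares. -/
lemma sum_divisors_sos (f : ℕ → ℝ) (N : ℕ) : ∑ n ∈ sos N, ∑ d ∈ n.divisors, f d =
    ∑ d ∈ Finset.Icc 1 N, f d * cnt (N / lift d) := by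
  have h1 : ∀ n ∈ sos N, ∑ d ∈ n.divisors, f d =
      ∑ d ∈ Finset.Icc 1 N, if d ∣ n then f d else 0 := by
    intro n hn
    have hn' := (mem_sos.1 hn).1
    rw [← Finset.sum_filter]
    refine Finset.sum_congr ?_ fun _ _ ↦ rfl
    ext d
    simp only [Nat.mem_divisors, Finset.mem_filter, Finset.mem_Icc]
    constructor
    · rintro ⟨h, h0⟩
      exact ⟨⟨Nat.pos_of_dvd_of_pos h hn'.1, (Nat.le_of_dvd hn'.1 h).trans hn'.2⟩, h⟩
    · rintro ⟨_, h⟩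
      exact ⟨h, by omega⟩
  rw [Finset.sum_congr rfl h1, Finset.sum_comm]
  refine Finset.sum_congr rfl fun d hd ↦ ?_
  have hd0 : d ≠ 0 := by
    have := (Finset.mem_Icc.1 hd).1
    omega
  rw [← Finset.sum_filter, Finset.sum_const, nsmul_eq_mul, card_filter_dvd_sos hd0, mul_comm]

lemma sum_log_sos (N : ℕ) : ∑ n ∈ sos N, Real.log n =
    ∑ d ∈ Finset.Icc 1 N, vonMangoldt d * cnt (N / lift d) := by
  simp_rw [← sum_divisors_sos, vonMangoldt_sum]

/-- Interchange of summation: `lift p = p` for the primes `p ≡ 1 mod 4`, and both sides sum over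
pairs with product at most `N`. -/
lemma sum_mangoldtOne_cnt (N : ℕ) : ∑ d ∈ Finset.Icc 1 N, mangoldtOne d * cnt (N / d) =
    ∑ m ∈ sos N, psiOne (N / m) := by
  have h1 : ∀ d ∈ Finset.Icc 1 N, mangoldtOne d * cnt (N / d) =
      ∑ m ∈ sos N, if m * d ≤ N then mangoldtOne d else 0 := by
    intro d hd
    rw [← Finset.sum_filter, Finset.sum_const, nsmul_eq_mul, mul_comm, cnt]
    congr 3
    ext m
    have hd1 := (Finset.mem_Icc.1 hd).1
    simp only [mem_sos, Finset.mem_filter, Nat.le_div_iff_mul_le hd1]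
    constructor
    · rintro ⟨⟨h1, h2⟩, hS⟩
      exact ⟨⟨⟨h1, (Nat.le_mul_of_pos_right m hd1).trans h2⟩, hS⟩, h2⟩
    · rintro ⟨⟨⟨h1, _⟩, hS⟩, h2⟩
      exact ⟨⟨h1, h2⟩, hS⟩
  have h2 : ∀ m ∈ sos N, psiOne (N / m) =
      ∑ d ∈ Finset.Icc 1 N, if m * d ≤ N then mangoldtOne d else 0 := by
    intro m hm
    have hm1 := (mem_sos.1 hm).1.1
    rw [← Finset.sum_filter, psiOne]
    refine Finset.sum_congr ?_ fun _ _ ↦ rfl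
    ext d
    simp only [Finset.mem_Icc, Finset.mem_filter, Nat.le_div_iff_mul_le hm1, mul_comm d m]
    constructor
    · rintro ⟨h1, h2⟩
      exact ⟨⟨h1, (Nat.le_mul_of_pos_left d hm1).trans h2⟩, h2⟩
    · rintro ⟨⟨h1, _⟩, h2⟩
      exact ⟨h1, h2⟩
  rw [Finset.sum_congr rfl h1, Finset.sum_congr rfl h2, Finset.sum_comm]

lemma summable_mangoldt_div_sq : Summable fun n : ℕ ↦ vonMangoldt n / (n : ℝ) ^ 2 := by
  have h := (Real.summable_one_div_nat_rpow (p := 3 / 2)).2 (by norm_num)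
  refine Summable.of_nonneg_of_le (fun n ↦ ?_) (fun n ↦ ?_) (h.mul_left 2)
  · have := vonMangoldt_nonneg (n := n)
    positivity
  · rcases Nat.eq_zero_or_pos n with rfl | hn
    · simp
    have hn' : (0 : ℝ) < n := by exact_mod_cast hn
    have h1 := vonMangoldt_le_log (n := n)
    have h2 := Real.log_le_rpow_div hn'.le (ε := 1 / 2) (by norm_num)
    have e : (n : ℝ) ^ 2 = (n : ℝ) ^ (1 / 2 : ℝ) * (n : ℝ) ^ (3 / 2 : ℝ) := by
      rw [← Real.rpow_add hn', ← Real.rpow_natCast]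
      norm_num
    have h3 : 0 < (n : ℝ) ^ (3 / 2 : ℝ) := Real.rpow_pos_of_pos hn' _
    have h4 : 0 < (n : ℝ) ^ (1 / 2 : ℝ) := Real.rpow_pos_of_pos hn' _
    rw [e, div_le_iff₀ (by positivity)]
    have e2 : 2 * (1 / (n : ℝ) ^ (3 / 2 : ℝ)) * ((n : ℝ) ^ (1 / 2 : ℝ) * (n : ℝ) ^ (3 / 2 : ℝ)) =
      (n : ℝ) ^ (1 / 2 : ℝ) / (1 / 2) := by field_simp
    rw [e2]
    linarith

lemma cnt_div_le (N d : ℕ) : cnt (N / d) ≤ N / d := (cnt_le _).trans Nat.cast_div_le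

/-- Only the primes `p ≡ 1 mod 4` contribute to the main term of the logarithmic sum: the prime
powers and the squares of the other primes are summable. -/
lemma exists_sum_log_sub_le : ∃ C : ℝ, ∀ N : ℕ,
    |∑ n ∈ sos N, Real.log n - ∑ m ∈ sos N, psiOne (N / m)| ≤ C * N := by
  have hnp : Summable fun n : ℕ ↦ (if n.Prime then 0 else vonMangoldt n) / n := by
    refine (vonMangoldt.summable_residueClass_non_primes_div (1 : ZMod 1)).congr fun n ↦ ?_
    have : (n : ZMod 1) = 1 := Subsingleton.elim _ _
    simp [vonMangoldt.residueClass, this]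
  set e : ℕ → ℝ := fun n ↦ (if n.Prime then 0 else vonMangoldt n) / n +
    2 * (vonMangoldt n / (n : ℝ) ^ 2) with he
  have hes : Summable e := hnp.add (summable_mangoldt_div_sq.mul_left 2)
  have he0 (n : ℕ) : 0 ≤ e n := by
    have := vonMangoldt_nonneg (n := n)
    simp only [he]
    split_ifs <;> positivity
  refine ⟨∑' n, e n, fun N ↦ ?_⟩
  rw [sum_log_sos, ← sum_mangoldtOne_cnt, ← Finset.sum_sub_distrib]
  refine (Finset.abs_sum_le_sum_abs _ _).trans ?_
  have hterm : ∀ d ∈ Finset.Icc 1 N,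
      |vonMangoldt d * cnt (N / lift d) - mangoldtOne d * cnt (N / d)| ≤ e d * N := by
    intro d hd
    have hd1 : (0 : ℝ) < d := by exact_mod_cast (Finset.mem_Icc.1 hd).1
    have hΛ := vonMangoldt_nonneg (n := d)
    have hN : (0 : ℝ) ≤ N := Nat.cast_nonneg N
    by_cases hp : d.Prime
    · have h4 : d % 4 = 1 ∨ d % 4 = 3 ∨ d = 2 := by
        rcases hp.eq_two_or_odd with h | h <;> omega
      rcases h4 with h4 | h4 | h4
      · rw [lift_prime hp (by omega), mangoldtOne_of_prime hp h4, vonMangoldt_apply_prime hp,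
          sub_self, abs_zero]
        exact mul_nonneg (he0 d) hN
      · rw [mangoldtOne_of_ne (by omega), zero_mul, sub_zero, lift_prime_three hp h4,
          abs_of_nonneg (mul_nonneg hΛ (cnt_nonneg _))]
        have := cnt_div_le N (d ^ 2)
        push_cast at this
        have h5 := mul_le_mul_of_nonneg_left this hΛ
        simp only [he, hp, if_true, zero_div, zero_add]
        have h6 : vonMangoldt d * ((N : ℝ) / (d : ℝ) ^ 2) = vonMangoldt d / (d : ℝ) ^ 2 * N := by
          ring
        have h7 : 0 ≤ vonMangoldt d / (d : ℝ) ^ 2 * N := by positivity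
        linarith
      · rw [mangoldtOne_of_ne (by omega), zero_mul, sub_zero, lift_prime hp (by omega),
          abs_of_nonneg (mul_nonneg hΛ (cnt_nonneg _))]
        have h5 := mul_le_mul_of_nonneg_left (cnt_div_le N d) hΛ
        simp only [he, hp, if_true, zero_div, zero_add]
        refine h5.trans (le_of_eq ?_)
        subst h4
        push_cast
        ring
    · have h1 : cnt (N / lift d) ≤ N / d :=
        (cnt_mono (Nat.div_le_div_left (le_lift d) (by exact_mod_cast hd1))).trans (cnt_div_le N d)
      have h2 := cnt_div_le N d
      have h3 := mul_le_mul_of_nonneg_left h1 hΛ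
      have h4 : mangoldtOne d * cnt (N / d) ≤ vonMangoldt d * (N / d) :=
        mul_le_mul (mangoldtOne_le d) h2 (cnt_nonneg _) hΛ
      have h5 := mul_nonneg hΛ (cnt_nonneg (N / lift d))
      have h6 := mul_nonneg (mangoldtOne_nonneg d) (cnt_nonneg (N / d))
      have h7 : vonMangoldt d * (N / d) ≤ e d * N := by
        simp only [he, hp, if_false]
        have h7 : 0 ≤ vonMangoldt d / (d : ℝ) ^ 2 * N := by positivity
        have : vonMangoldt d * ((N : ℝ) / d) = vonMangoldt d / d * N := by ring
        rw [this]
        nlinarith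
      rw [abs_le]
      constructor <;> linarith
  refine (Finset.sum_le_sum hterm).trans ?_
  rw [← Finset.sum_mul]
  exact mul_le_mul_of_nonneg_right (hes.sum_le_tsum _ fun n _ ↦ he0 n) (Nat.cast_nonneg N)

lemma sum_log_eq_log_factorial (N : ℕ) :
    ∑ n ∈ Finset.Icc 1 N, Real.log n = Real.log (N.factorial : ℝ) := by
  induction N with
  | zero => simp
  | succ N ih =>
    rw [Finset.sum_Icc_succ_top (by omega), ih, Nat.factorial_succ, Nat.cast_mul,
      Real.log_mul (by positivity) (by positivity), add_comm]

lemma sum_log_sos_bounds (N : ℕ) : cnt N * Real.log N - N ≤ ∑ n ∈ sos N, Real.log n ∧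
    ∑ n ∈ sos N, Real.log n ≤ cnt N * Real.log N := by
  have hlog : ∀ n ∈ Finset.Icc 1 N, Real.log n ≤ Real.log N := fun n hn ↦ by
    rw [Finset.mem_Icc] at hn
    exact Real.log_le_log (by exact_mod_cast hn.1) (by exact_mod_cast hn.2)
  have hsub : sos N ⊆ Finset.Icc 1 N := fun n hn ↦ Finset.mem_Icc.2 (mem_sos.1 hn).1
  have h1 : ∑ n ∈ sos N, (Real.log N - Real.log n) ≤
      ∑ n ∈ Finset.Icc 1 N, (Real.log N - Real.log n) :=
    Finset.sum_le_sum_of_subset_of_nonneg hsub fun n hn _ ↦ sub_nonneg.2 (hlog n hn)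
  have h2 : 0 ≤ ∑ n ∈ sos N, (Real.log N - Real.log n) :=
    Finset.sum_nonneg fun n hn ↦ sub_nonneg.2 (hlog n (hsub hn))
  rw [Finset.sum_sub_distrib, Finset.sum_sub_distrib, sum_log_eq_log_factorial, Finset.sum_const,
    Finset.sum_const, nsmul_eq_mul, nsmul_eq_mul, Nat.card_Icc, Nat.add_sub_cancel] at h1
  rw [Finset.sum_sub_distrib, Finset.sum_const, nsmul_eq_mul] at h2
  have h3 : (N : ℝ) * Real.log N - Real.log (N.factorial : ℝ) ≤ N := by
    rcases Nat.eq_zero_or_pos N with rfl | hN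
    · simp
    have hN' : (0 : ℝ) < N := by exact_mod_cast hN
    have hf : (0 : ℝ) < N.factorial := by exact_mod_cast N.factorial_pos
    have h := Real.pow_div_factorial_le_exp (N : ℝ) hN'.le N
    have h' := Real.log_le_log (by positivity) h
    rwa [Real.log_div (by positivity) hf.ne', Real.log_pow, Real.log_exp] at h'
  change 0 ≤ cnt N * Real.log N - _ at h2
  change cnt N * Real.log N - _ ≤ _ at h1
  constructor <;> linarith

/-- The logarithmic counting function of the sums of two squares. -/
noncomputable def recipSum (N : ℕ) : ℝ := ∑ m ∈ sos N, (1 / m : ℝ)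

lemma exists_psiOne_sub_le {η : ℝ} (hη : 0 < η) :
    ∃ C : ℝ, 0 ≤ C ∧ ∀ k : ℕ, |psiOne k - k / 2| ≤ η * k + C := by
  have h := (tendsto_psiOne_div.eventually (Metric.closedBall_mem_nhds (1 / 2 : ℝ) hη))
  obtain ⟨K, hK⟩ := eventually_atTop.1 h
  refine ⟨(Real.log 4 + 4) * K + K / 2, by have := Real.log_nonneg (x := 4) (by norm_num); positivity, fun k ↦ ?_⟩
  have hlog := Real.log_nonneg (x := 4) (by norm_num)
  have hk : (0 : ℝ) ≤ k := Nat.cast_nonneg k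
  have hK0 : (0 : ℝ) ≤ K := Nat.cast_nonneg K
  rcases Nat.eq_zero_or_pos k with rfl | hk0
  · simp [psiOne]
    positivity
  rcases le_or_gt K k with hkK | hkK
  · have h1 := hK k hkK
    have hk' : (0 : ℝ) < k := by exact_mod_cast hk0
    rw [Real.dist_eq] at h1
    have e : psiOne k - k / 2 = (psiOne k / k - 1 / 2) * k := by field_simp
    rw [e, abs_mul, abs_of_pos hk']
    have := mul_le_mul_of_nonneg_right h1 hk
    have : 0 ≤ (Real.log 4 + 4) * K + K / 2 := by positivity
    linarith
  · have h1 := psiOne_le k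
    have h0 := psiOne_nonneg k
    have h2 : (k : ℝ) ≤ K := by exact_mod_cast hkK.le
    have h3 : (Real.log 4 + 4) * k ≤ (Real.log 4 + 4) * K :=
      mul_le_mul_of_nonneg_left h2 (by positivity)
    have h4 := mul_nonneg hη.le hk
    have h5 := mul_nonneg (by positivity : 0 ≤ Real.log 4 + 4) hK0
    rw [abs_le]
    constructor <;> linarith

/-- The two evaluations of `∑ log n` over the sums of two squares up to `N`, compared. -/
lemma exists_cnt_log_sub_le {η : ℝ} (hη : 0 < η) : ∃ C : ℝ, ∀ N : ℕ,
    |cnt N * Real.log N - N * recipSum N / 2| ≤ η * (N * recipSum N) + C * N := by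
  obtain ⟨C, hC0, hC⟩ := exists_psiOne_sub_le hη
  obtain ⟨C', hC'⟩ := exists_sum_log_sub_le
  refine ⟨C' + 1 + (C + 1), fun N ↦ ?_⟩
  have h1 := sum_log_sos_bounds N
  have h2 := hC' N
  have h3 : |∑ m ∈ sos N, psiOne (N / m) - N * recipSum N / 2| ≤
      η * (N * recipSum N) + (C + 1) * N := by
    have e : ∑ m ∈ sos N, psiOne (N / m) - N * recipSum N / 2 =
        ∑ m ∈ sos N, (psiOne (N / m) - N * (1 / m) / 2) := by
      rw [Finset.sum_sub_distrib, recipSum, Finset.mul_sum, Finset.sum_div]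
    rw [e]
    refine (Finset.abs_sum_le_sum_abs _ _).trans ?_
    have hterm : ∀ m ∈ sos N, |psiOne (N / m) - N * (1 / m) / 2| ≤
        η * (N * (1 / m)) + (C + 1) := by
      intro m hm
      have hm1 : (0 : ℝ) < m := by exact_mod_cast (mem_sos.1 hm).1.1
      have h4 := hC (N / m)
      have h5 : ((N / m : ℕ) : ℝ) ≤ N * (1 / m) := by
        rw [mul_one_div]; exact Nat.cast_div_le
      have h6 : (N : ℝ) * (1 / m) ≤ ((N / m : ℕ) : ℝ) + 1 := by
        rw [mul_one_div, div_le_iff₀ hm1]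
        have := Nat.lt_mul_div_succ N (mem_sos.1 hm).1.1
        have h7 : (N : ℝ) < m * ((N / m : ℕ) + 1) := by exact_mod_cast this
        linarith
      have h7 := mul_le_mul_of_nonneg_left h5 hη.le
      rw [abs_le] at h4 ⊢
      constructor <;> linarith
    refine (Finset.sum_le_sum hterm).trans ?_
    rw [Finset.sum_add_distrib, Finset.sum_const, nsmul_eq_mul, ← Finset.mul_sum,
      ← Finset.mul_sum]
    have := mul_le_mul_of_nonneg_right (cnt_le N) (by positivity : 0 ≤ C + 1)
    change _ + cnt N * (C + 1) ≤ _
    change η * (N * recipSum N) + _ ≤ _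
    linarith
  rw [abs_le] at h2 h3 ⊢
  have := Nat.cast_nonneg (α := ℝ) N
  constructor <;> linarith

lemma isSumTwoSquares_of_prime {p : ℕ} (hp : p.Prime) (h : p % 4 = 1) : IsSumTwoSquares p := by
  rw [isSumTwoSquares_iff hp.ne_zero]
  intro q _ h4
  have : q ≠ p := by rintro rfl; omega
  rw [hp.factorization, Finsupp.single_apply, if_neg this.symm]
  exact Even.zero

lemma tendsto_recipSum : Tendsto recipSum atTop atTop := by
  have h := not_summable_one_div_primes
  rw [not_summable_iff_tendsto_nat_atTop_of_nonneg (by intro n; split_ifs <;> positivity)] at h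
  refine tendsto_atTop_mono (fun N ↦ ?_) h
  rw [← Finset.sum_filter]
  refine Finset.sum_le_sum_of_subset_of_nonneg (fun p hp ↦ ?_) fun _ _ _ ↦ by positivity
  rw [Finset.mem_filter, Finset.mem_range] at hp
  exact mem_sos.2 ⟨⟨hp.2.1.one_lt.le, hp.1.le⟩, isSumTwoSquares_of_prime hp.2.1 hp.2.2⟩

lemma tendsto_cnt_log : Tendsto (fun N : ℕ ↦ cnt N * Real.log N / (N * recipSum N)) atTop
    (𝓝 (1 / 2)) := by
  rw [Metric.tendsto_atTop']
  intro ε hε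
  obtain ⟨C, hC⟩ := exists_cnt_log_sub_le (half_pos hε)
  have h := (tendsto_recipSum.eventually_gt_atTop (max 0 (2 * C / ε)))
  obtain ⟨K, hK⟩ := eventually_atTop.1 h
  refine ⟨K, fun N hN ↦ ?_⟩
  have h1 := hK N hN.le
  have hN0 : (0 : ℝ) < N := by exact_mod_cast (by omega : 0 < N)
  rw [max_lt_iff] at h1
  have h2 := hC N
  rw [Real.dist_eq]
  have hL : 0 < N * recipSum N := mul_pos hN0 h1.1
  have e : cnt N * Real.log N / (N * recipSum N) - 1 / 2 =
      (cnt N * Real.log N - N * recipSum N / 2) / (N * recipSum N) := by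
    have := h1.1.ne'
    field_simp
  rw [e, abs_div, abs_of_pos hL, div_lt_iff₀ hL]
  refine h2.trans_lt ?_
  have h3 : C < ε / 2 * recipSum N := by
    have := h1.2
    rw [div_lt_iff₀ hε] at this
    linarith
  have := mul_lt_mul_of_pos_right h3 hN0
  linarith

lemma tendsto_div_div {m : ℕ} (hm : 0 < m) :
    Tendsto (fun N : ℕ ↦ ((N / m : ℕ) : ℝ) / N) atTop (𝓝 (1 / m)) := by
  have hm' : (0 : ℝ) < m := by exact_mod_cast hm
  have h0 : Tendsto (fun N : ℕ ↦ (1 / m : ℝ) - 1 / N) atTop (𝓝 (1 / m)) := by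
    simpa using tendsto_const_nhds.sub (tendsto_const_div_atTop_nhds_zero_nat (1 : ℝ))
  refine tendsto_of_tendsto_of_tendsto_of_le_of_le' h0 tendsto_const_nhds ?_ ?_
  · filter_upwards [eventually_gt_atTop 0] with N hN
    have hN' : (0 : ℝ) < N := by exact_mod_cast hN
    have h7 : (N : ℝ) < m * ((N / m : ℕ) + 1) := by exact_mod_cast Nat.lt_mul_div_succ N hm
    rw [sub_le_iff_le_add, ← add_div, div_le_div_iff₀ hm' hN']
    linarith
  · filter_upwards [eventually_gt_atTop 0] with N hN
    have hN' : (0 : ℝ) < N := by exact_mod_cast hN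
    rw [div_le_iff₀ hN', one_div_mul_eq_div]
    exact Nat.cast_div_le

/-- The slow variation of `recipSum`. -/
lemma recipSum_sub_le {m : ℕ} (hm : 0 < m) (N : ℕ) :
    0 ≤ recipSum N - recipSum (N / m) ∧ recipSum N - recipSum (N / m) ≤ m := by
  have hsub : sos (N / m) ⊆ sos N := sos_mono (Nat.div_le_self _ _)
  have e : recipSum N - recipSum (N / m) = ∑ j ∈ sos N \ sos (N / m), (1 / j : ℝ) := by
    rw [recipSum, ← Finset.sum_sdiff hsub, recipSum, add_sub_cancel_right]
  rw [e]
  refine ⟨Finset.sum_nonneg fun _ _ ↦ by positivity, ?_⟩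
  rcases Nat.eq_zero_or_pos N with rfl | hN
  · simp
  have hN' : (0 : ℝ) < N := by exact_mod_cast hN
  have hterm : ∀ j ∈ sos N \ sos (N / m), (1 / j : ℝ) ≤ m / N := by
    intro j hj
    rw [Finset.mem_sdiff, mem_sos, mem_sos] at hj
    have h1 : N / m < j := by
      by_contra hc
      exact hj.2 ⟨⟨hj.1.1.1, not_lt.1 hc⟩, hj.1.2⟩
    have hj1 : (0 : ℝ) < j := by exact_mod_cast hj.1.1.1
    rw [div_le_div_iff₀ hj1 hN', one_mul]
    rw [Nat.div_lt_iff_lt_mul hm] at h1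
    rw [mul_comm]
    exact_mod_cast h1.le
  refine (Finset.sum_le_sum hterm).trans ?_
  rw [Finset.sum_const, nsmul_eq_mul]
  have h2 : ((sos N \ sos (N / m)).card : ℝ) ≤ N :=
    (Nat.cast_le.2 (Finset.card_le_card Finset.sdiff_subset)).trans (cnt_le N)
  calc _ ≤ (N : ℝ) * (m / N) := mul_le_mul_of_nonneg_right h2 (by positivity)
    _ = m := by field_simp

/-- The counting function of the sums of two squares is regularly varying of index one. -/
theorem tendsto_cnt_div {m : ℕ} (hm : 0 < m) :
    Tendsto (fun N : ℕ ↦ cnt (N / m) / cnt N) atTop (𝓝 (1 / m)) := by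
  have hdiv : Tendsto (fun N : ℕ ↦ N / m) atTop atTop :=
    Nat.tendsto_div_const_atTop hm.ne'
  have hR := tendsto_cnt_log
  have hRm := hR.comp hdiv
  have hm' : (0 : ℝ) < m := by exact_mod_cast hm
  have hL : Tendsto (fun N ↦ recipSum (N / m) / recipSum N) atTop (𝓝 1) := by
    have h0 : Tendsto (fun N ↦ 1 - m / recipSum N) atTop (𝓝 1) := by
      simpa using tendsto_const_nhds.sub (tendsto_recipSum.const_div_atTop (m : ℝ))
    refine tendsto_of_tendsto_of_tendsto_of_le_of_le' h0 tendsto_const_nhds ?_ ?_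
    all_goals
      filter_upwards [tendsto_recipSum.eventually_gt_atTop 0] with N hN
      have := recipSum_sub_le hm N
    · rw [le_div_iff₀ hN, sub_mul, div_mul_cancel₀ _ hN.ne']
      linarith
    · rw [div_le_one hN]
      linarith
  have hlogt : Tendsto (fun N : ℕ ↦ Real.log ((N / m : ℕ) : ℝ)) atTop atTop :=
    Real.tendsto_log_atTop.comp (tendsto_natCast_atTop_atTop.comp hdiv)
  have hlog : Tendsto (fun N : ℕ ↦ Real.log N / Real.log ((N / m : ℕ) : ℝ)) atTop (𝓝 1) := by
    have h0 : Tendsto (fun N : ℕ ↦ 1 + Real.log (2 * m) / Real.log ((N / m : ℕ) : ℝ)) atTop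
        (𝓝 1) := by
      simpa using tendsto_const_nhds.add (hlogt.const_div_atTop (Real.log (2 * m)))
    refine tendsto_of_tendsto_of_tendsto_of_le_of_le' tendsto_const_nhds h0 ?_ ?_
    all_goals
      filter_upwards [hlogt.eventually_gt_atTop 0, hdiv.eventually_ge_atTop 1,
        eventually_gt_atTop 0] with N hN hN1 hN0
      have hk : (1 : ℝ) ≤ ((N / m : ℕ) : ℝ) := by exact_mod_cast hN1
      have hN0' : (0 : ℝ) < N := by exact_mod_cast hN0
    · rw [le_div_iff₀ hN, one_mul]
      exact Real.log_le_log (by linarith) (by exact_mod_cast Nat.div_le_self N m)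
    · rw [div_le_iff₀ hN, add_mul, div_mul_cancel₀ _ hN.ne', one_mul, add_comm,
        ← Real.log_mul (by positivity) (by linarith)]
      refine Real.log_le_log hN0' ?_
      have h7 : (N : ℝ) < m * ((N / m : ℕ) + 1) := by exact_mod_cast Nat.lt_mul_div_succ N hm
      nlinarith
  -- divide the asymptotics at `N / m` by those at `N`; the sums and logarithms cancel in the limit
  have h := (((hRm.div hR (by norm_num)).mul (tendsto_div_div hm)).mul hL).mul hlog
  have e : (1 / 2 / (1 / 2) * (1 / m) * 1 * 1 : ℝ) = 1 / m := by ring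
  rw [e] at h
  refine h.congr' ?_
  filter_upwards [hlogt.eventually_gt_atTop 0, hdiv.eventually_ge_atTop 1,
    eventually_gt_atTop 1, tendsto_recipSum.eventually_gt_atTop 0,
    (tendsto_recipSum.comp hdiv).eventually_gt_atTop 0] with N h1 h2 h3 h4 h5
  have hk : ((N / m : ℕ) : ℝ) ≠ 0 := by exact_mod_cast (by omega)
  have hN0' : (N : ℝ) ≠ 0 := by exact_mod_cast (by omega)
  have hlN : Real.log N ≠ 0 := (Real.log_pos (by exact_mod_cast h3)).ne'
  have hc := (cnt_pos h3.le).ne'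
  have h1' := h1.ne'
  have h4' := h4.ne'
  have h5' := h5.ne'
  simp only [Function.comp_apply, Pi.div_apply] at h5' ⊢
  field_simp

/-! ### The uniform bound, and elementary properties of `n / σ(n)` -/

/-- The squares alone give `√N` sums of two squares. -/
lemma two_pow_le_cnt {k N : ℕ} (h : 4 ^ k ≤ N) : (2 : ℝ) ^ k ≤ cnt N := by
  have h1 : (Finset.Icc 1 (2 ^ k)).card ≤ (sos N).card := by
    refine Finset.card_le_card_of_injOn (fun i ↦ i ^ 2) (fun i hi ↦ ?_) (fun a _ b _ hab ↦ ?_)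
    · simp only [Finset.coe_Icc, mem_Icc] at hi
      refine mem_sos.2 ⟨⟨Nat.one_le_pow _ _ hi.1, ?_⟩, i, 0, by push_cast; ring⟩
      calc i ^ 2 ≤ (2 ^ k) ^ 2 := Nat.pow_le_pow_left hi.2 2
        _ = 4 ^ k := by rw [← pow_mul, mul_comm, pow_mul]; norm_num
        _ ≤ N := h
    · exact Nat.pow_left_injective (by norm_num : 2 ≠ 0) hab
  rw [Nat.card_Icc, Nat.add_sub_cancel] at h1
  calc (2 : ℝ) ^ k = ((2 ^ k : ℕ) : ℝ) := by push_cast; rfl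
    _ ≤ _ := Nat.cast_le.2 h1

/-- A bound of Potter type for the regularly varying function `cnt`. -/
lemma exists_cnt_div_le : ∃ C : ℝ, 0 < C ∧ ∀ d N : ℕ, 0 < d →
    cnt (N / d) ≤ C / √d * cnt N := by
  have h := (tendsto_cnt_div (m := 4) (by norm_num)).eventually
    (ge_mem_nhds (by norm_num : (1 / ((4 : ℕ) : ℝ)) < 1 / 2))
  obtain ⟨K, hK⟩ := eventually_atTop.1 h
  -- each division by `4` halves `cnt` above the threshold `K`; below it, `two_pow_le_cnt` suffices
  have hpow (j N : ℕ) : cnt (N / 4 ^ j) * 2 ^ j ≤ (K + 1) * cnt N := by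
    induction j with
    | zero =>
      have := cnt_nonneg N
      have := Nat.cast_nonneg (α := ℝ) K
      simp
      nlinarith
    | succ j ih =>
      rw [pow_succ, ← Nat.div_div_eq_div_mul]
      set M := N / 4 ^ j with hM
      rcases le_or_gt K M with hKM | hKM
      · have h1 := hK M hKM
        rcases Nat.eq_zero_or_pos M with h0 | h0
        · rw [h0, Nat.zero_div, cnt_zero, zero_mul]
          have := cnt_nonneg N
          positivity
        rw [div_le_iff₀ (cnt_pos h0)] at h1
        calc cnt (M / 4) * 2 ^ (j + 1) ≤ 1 / 2 * cnt M * 2 ^ (j + 1) :=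
              mul_le_mul_of_nonneg_right h1 (by positivity)
          _ = cnt M * 2 ^ j := by rw [pow_succ]; ring
          _ ≤ _ := ih
      · rcases Nat.eq_zero_or_pos (M / 4) with h0 | h0
        · rw [h0, cnt_zero, zero_mul]
          have := cnt_nonneg N
          positivity
        · have h1 : 4 ^ (j + 1) ≤ N := by
            rw [hM, Nat.div_div_eq_div_mul, ← pow_succ] at h0
            exact (Nat.div_pos_iff.1 h0).2
          have h2 := two_pow_le_cnt h1
          have h3 : cnt (M / 4) ≤ K := by
            refine (cnt_le _).trans ?_
            exact_mod_cast (Nat.div_le_self _ _).trans hKM.le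
          have h4 : cnt (M / 4) ≤ K + 1 := by linarith
          exact mul_le_mul h4 h2 (by positivity) (by positivity)
  refine ⟨2 * (K + 1), by positivity, fun d N hd ↦ ?_⟩
  obtain ⟨j, hj1, hj2⟩ := exists_nat_pow_near (show 1 ≤ d from hd) (by norm_num : 1 < 4)
  have h1 : cnt (N / d) ≤ cnt (N / 4 ^ j) :=
    cnt_mono (Nat.div_le_div_left hj1 (by positivity))
  have h2 := hpow j N
  have hd' : (0 : ℝ) < d := by exact_mod_cast hd
  have h3 : √(d : ℝ) ≤ 2 * 2 ^ j := by
    rw [Real.sqrt_le_left (by positivity)]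
    have : (d : ℝ) ≤ 4 ^ (j + 1) := by exact_mod_cast hj2.le
    refine this.trans (le_of_eq ?_)
    rw [mul_pow, ← pow_mul, mul_comm j 2, pow_mul, pow_succ]
    norm_num
    ring
  have hs : 0 < √(d : ℝ) := Real.sqrt_pos.2 hd'
  rw [div_mul_eq_mul_div, le_div_iff₀ hs]
  calc cnt (N / d) * √d ≤ cnt (N / 4 ^ j) * (2 * 2 ^ j) :=
        mul_le_mul h1 h3 hs.le (cnt_nonneg _)
    _ = 2 * (cnt (N / 4 ^ j) * 2 ^ j) := by ring
    _ ≤ 2 * ((K + 1) * cnt N) := by linarith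
    _ = _ := by ring

lemma summable_inv_mul_sqrt : Summable fun d : ℕ ↦ (1 / d * (1 / √d) : ℝ) := by
  refine ((Real.summable_one_div_nat_rpow (p := 3 / 2)).2 (by norm_num)).congr fun d ↦ ?_
  rcases Nat.eq_zero_or_pos d with rfl | hd
  · simp
  have hd' : (0 : ℝ) < d := by exact_mod_cast hd
  rw [Real.sqrt_eq_rpow, one_div_mul_one_div, ← Real.rpow_one_add' hd'.le (by norm_num)]
  norm_num

/-- The sum of the reciprocals of the divisors, `σ(n) / n`. -/
noncomputable def ssum (n : ℕ) : ℝ := ∑ d ∈ n.divisors, (1 / d : ℝ)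

lemma sigma_eq_mul_ssum (n : ℕ) : ((sigma 1 n : ℕ) : ℝ) = n * ssum n := by
  rw [sigma_one_apply, ← Nat.sum_div_divisors, ssum, Finset.mul_sum, Nat.cast_sum]
  refine Finset.sum_congr rfl fun d hd ↦ ?_
  have hd' := (Nat.mem_divisors.1 hd).1
  rw [Nat.cast_div_charZero hd', mul_one_div]

lemma one_le_ssum {n : ℕ} (hn : n ≠ 0) : 1 ≤ ssum n := by
  have := Finset.single_le_sum (f := fun d : ℕ ↦ (1 / d : ℝ)) (fun _ _ ↦ by positivity)
    (Nat.one_mem_divisors.2 hn)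
  simpa [ssum] using this

lemma sigmaRatio_eq {n : ℕ} (hn : n ≠ 0) : sigmaRatio n = 1 / ssum n := by
  have h1 := one_le_ssum hn
  have hn' : (n : ℝ) ≠ 0 := by exact_mod_cast hn
  rw [sigmaRatio, sigma_eq_mul_ssum]
  field_simp

lemma sigmaRatio_pos {n : ℕ} (hn : n ≠ 0) : 0 < sigmaRatio n := by
  rw [sigmaRatio_eq hn]
  have := one_le_ssum hn
  positivity

lemma sigmaRatio_le_one {n : ℕ} (hn : n ≠ 0) : sigmaRatio n ≤ 1 := by
  rw [sigmaRatio_eq hn]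
  have := one_le_ssum hn
  rw [div_le_one (by linarith)]
  exact this

lemma sigmaRatio_mul {m n : ℕ} (h : m.Coprime n) :
    sigmaRatio (m * n) = sigmaRatio m * sigmaRatio n := by
  simp only [sigmaRatio, isMultiplicative_sigma.map_mul_of_coprime h]
  push_cast
  rw [mul_div_mul_comm]

lemma sigmaRatio_prime {p : ℕ} (hp : p.Prime) : sigmaRatio p = p / (p + 1) := by
  have h : sigma 1 p = p + 1 := by
    rw [sigma_one_apply, hp.sum_divisors]
  rw [sigmaRatio, h]
  push_cast
  rfl

lemma sigmaRatio_one : sigmaRatio 1 = 1 := by simp [sigmaRatio]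

/-- Divisors larger than `K` account for the difference between `n` and `gcd n K!`. -/
lemma abs_sigmaRatio_sub_le {n : ℕ} (hn : n ≠ 0) (K : ℕ) :
    |sigmaRatio n - sigmaRatio (n.gcd K.factorial)| ≤
      ∑ d ∈ n.divisors, if K < d then (1 / d : ℝ) else 0 := by
  set g := n.gcd K.factorial
  have hg : g ≠ 0 := Nat.gcd_ne_zero_left hn
  have h1 := one_le_ssum hn
  have h2 := one_le_ssum hg
  have hsub : g.divisors ⊆ n.divisors := Nat.divisors_subset_of_dvd hn (Nat.gcd_dvd_left _ _)
  have h3 : 0 ≤ ssum n - ssum g := sub_nonneg.2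
    (Finset.sum_le_sum_of_subset_of_nonneg hsub fun _ _ _ ↦ by positivity)
  have h4 : ssum n - ssum g ≤ ∑ d ∈ n.divisors, if K < d then (1 / d : ℝ) else 0 := by
    rw [ssum, ssum, ← Finset.sum_sdiff hsub, add_sub_cancel_right, ← Finset.sum_filter]
    refine Finset.sum_le_sum_of_subset_of_nonneg (fun d hd ↦ ?_) fun _ _ _ ↦ by positivity
    rw [Finset.mem_sdiff, Nat.mem_divisors, Nat.mem_divisors] at hd
    rw [Finset.mem_filter, Nat.mem_divisors]
    refine ⟨hd.1, ?_⟩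
    by_contra hc
    exact hd.2 ⟨Nat.dvd_gcd hd.1.1 (Nat.dvd_factorial
      (Nat.pos_of_dvd_of_pos hd.1.1 (Nat.pos_of_ne_zero hn)) (not_lt.1 hc)), hg⟩
  refine le_trans ?_ h4
  rw [sigmaRatio_eq hn, sigmaRatio_eq hg, div_sub_div _ _ (by linarith) (by linarith), abs_div,
    abs_of_pos (by positivity : 0 < ssum n * ssum g), div_le_iff₀ (by positivity), abs_le]
  constructor <;> nlinarith [mul_le_mul h1 h2 zero_le_one (by linarith)]

/-! ### Mean values and sieving -/

lemma exists_tendsto_of_approx {a : ℕ → ℝ} (h : ∀ ε > 0, ∃ b : ℕ → ℝ,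
    (∃ l, Tendsto b atTop (𝓝 l)) ∧ ∀ᶠ N in atTop, |a N - b N| ≤ ε) :
    ∃ l, Tendsto a atTop (𝓝 l) := by
  refine cauchySeq_tendsto_of_complete (Metric.cauchySeq_iff'.2 fun ε hε ↦ ?_)
  obtain ⟨b, ⟨l, hl⟩, hab⟩ := h (ε / 5) (by positivity)
  have h1 := hl.eventually (Metric.ball_mem_nhds l (by positivity : 0 < ε / 5))
  obtain ⟨K, hK⟩ := eventually_atTop.1 (h1.and hab)
  refine ⟨K, fun n hn ↦ ?_⟩
  have h2 := hK n hn
  have h3 := hK K le_rfl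
  simp only [Real.dist_eq, abs_lt, abs_le] at h2 h3 ⊢
  constructor <;> linarith [h2.1.1, h2.1.2, h2.2.1, h2.2.2, h3.1.1, h3.1.2, h3.2.1, h3.2.2]

/-- The average of `g` over the sums of two squares in `[1, N]`. -/
noncomputable def avg (N : ℕ) (g : ℕ → ℝ) : ℝ := (∑ n ∈ sos N, g n) / cnt N

lemma abs_avg_sub_le {N : ℕ} (hN : 1 ≤ N) {f g e : ℕ → ℝ} {ε : ℝ}
    (h : ∀ n ∈ sos N, |f n - g n| ≤ e n) (he : ∑ n ∈ sos N, e n ≤ ε * cnt N) :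
    |avg N f - avg N g| ≤ ε := by
  have hc := cnt_pos hN
  rw [avg, avg, ← sub_div, ← Finset.sum_sub_distrib, abs_div, abs_of_pos hc, div_le_iff₀ hc]
  exact ((Finset.abs_sum_le_sum_abs _ _).trans (Finset.sum_le_sum h)).trans he

lemma tendsto_cnt_lift (d : ℕ) :
    Tendsto (fun N ↦ cnt (N / lift d) / cnt N) atTop (𝓝 (1 / lift d)) :=
  tendsto_cnt_div (lift_pos d)

/-- Functions of `gcd n M` have a mean value over the sums of two squares. -/
lemma exists_tendsto_avg_gcd (g : ℕ → ℝ) {M : ℕ} (hM : M ≠ 0) :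
    ∃ l, Tendsto (fun N ↦ avg N fun n ↦ g (n.gcd M)) atTop (𝓝 l) := by
  -- by Möbius inversion, `g (gcd n M)` is the sum of `c d` over the common divisors of `n` and `M`
  set c : ℕ → ℝ := fun n ↦ ∑ x ∈ n.divisorsAntidiagonal, ((moebius x.1 : ℤ) : ℝ) * g x.2
  have hc : ∀ k > 0, ∑ d ∈ k.divisors, c d = g k :=
    sum_eq_iff_sum_mul_moebius_eq.2 fun _ _ ↦ rfl
  have hlim := tendsto_finsetSum M.divisors fun d _ ↦ (tendsto_cnt_lift d).const_mul (c d)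
  refine ⟨_, hlim.congr fun N ↦ ?_⟩
  have h1 : ∀ n ∈ sos N, g (n.gcd M) = ∑ d ∈ M.divisors, if d ∣ n then c d else 0 := by
    intro n hn
    rw [← hc _ (Nat.gcd_pos_of_pos_right n (Nat.pos_of_ne_zero hM)), ← Finset.sum_filter]
    refine Finset.sum_congr ?_ fun _ _ ↦ rfl
    ext d
    simp only [Nat.mem_divisors, Finset.mem_filter, Nat.dvd_gcd_iff]
    have : n.gcd M ≠ 0 := Nat.gcd_ne_zero_right hM
    tauto
  rw [avg, Finset.sum_congr rfl h1, Finset.sum_comm, Finset.sum_div]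
  refine Finset.sum_congr rfl fun d hd ↦ ?_
  have hd0 : d ≠ 0 := (Nat.pos_of_mem_divisors hd).ne'
  rw [← Finset.sum_filter, Finset.sum_const, nsmul_eq_mul, card_filter_dvd_sos hd0, mul_comm,
    div_mul_eq_mul_div]

lemma cnt_div_lift_le {C : ℝ} (hC : ∀ d N : ℕ, 0 < d → cnt (N / d) ≤ C / √d * cnt N) {d : ℕ}
    (hd : 0 < d) (N : ℕ) : cnt (N / lift d) ≤ C * (1 / √d) * cnt N := by
  rw [mul_one_div]
  exact (cnt_mono (Nat.div_le_div_left (le_lift d) hd)).trans (hC d N hd)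

/-- The large divisors contribute little to `σ(n) / n` on average. -/
lemma exists_sum_large_divisors_le {ε : ℝ} (hε : 0 < ε) : ∃ K : ℕ, ∀ N,
    ∑ n ∈ sos N, ∑ d ∈ n.divisors, (if K < d then (1 / d : ℝ) else 0) ≤ ε * cnt N := by
  obtain ⟨C, hC0, hC⟩ := exists_cnt_div_le
  obtain ⟨s, hs⟩ := summable_iff_vanishing_norm.1 summable_inv_mul_sqrt (ε / C) (by positivity)
  refine ⟨s.sup id, fun N ↦ ?_⟩
  rw [sum_divisors_sos]
  simp_rw [ite_mul, zero_mul]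
  rw [← Finset.sum_filter]
  set t := (Finset.Icc 1 N).filter (s.sup id < ·)
  have hdis : Disjoint t s := by
    rw [Finset.disjoint_left]
    intro d hd hds
    have h1 := (Finset.mem_filter.1 hd).2
    have h2 : d ≤ s.sup id := Finset.le_sup (f := id) hds
    omega
  have h1 := hs t hdis
  rw [Real.norm_of_nonneg (Finset.sum_nonneg fun _ _ ↦ by positivity)] at h1
  have hterm : ∀ d ∈ t, 1 / (d : ℝ) * cnt (N / lift d) ≤ 1 / d * (1 / √d) * (C * cnt N) := by
    intro d hd
    have hd0 := (Finset.mem_Icc.1 (Finset.mem_filter.1 hd).1).1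
    have h2 := mul_le_mul_of_nonneg_left (cnt_div_lift_le hC hd0 N)
      (by positivity : 0 ≤ 1 / (d : ℝ))
    refine h2.trans (le_of_eq ?_)
    ring
  refine (Finset.sum_le_sum hterm).trans ?_
  rw [← Finset.sum_mul]
  calc _ ≤ ε / C * (C * cnt N) :=
        mul_le_mul_of_nonneg_right h1.le (mul_nonneg hC0.le (cnt_nonneg _))
    _ = _ := by field_simp

lemma exists_sum_ssum_le : ∃ C : ℝ, 0 < C ∧ ∀ N, ∑ n ∈ sos N, ssum n ≤ C * cnt N := by
  obtain ⟨C, hC0, hC⟩ := exists_cnt_div_le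
  have hpos : 0 ≤ ∑' d : ℕ, (1 / d * (1 / √d) : ℝ) := tsum_nonneg fun _ ↦ by positivity
  refine ⟨(∑' d : ℕ, (1 / d * (1 / √d) : ℝ)) * C + 1, by positivity, fun N ↦ ?_⟩
  simp_rw [ssum]
  rw [sum_divisors_sos (fun d ↦ (1 / d : ℝ))]
  have hterm : ∀ d ∈ Finset.Icc 1 N,
      1 / (d : ℝ) * cnt (N / lift d) ≤ 1 / d * (1 / √d) * (C * cnt N) := by
    intro d hd
    have h2 := mul_le_mul_of_nonneg_left (cnt_div_lift_le hC (Finset.mem_Icc.1 hd).1 N)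
      (by positivity : 0 ≤ 1 / (d : ℝ))
    refine h2.trans (le_of_eq ?_)
    ring
  refine (Finset.sum_le_sum hterm).trans ?_
  rw [← Finset.sum_mul]
  have h1 := summable_inv_mul_sqrt.sum_le_tsum (Finset.Icc 1 N) fun _ _ ↦ by positivity
  have h2 := mul_le_mul_of_nonneg_right h1 (mul_nonneg hC0.le (cnt_nonneg N))
  have := cnt_nonneg N
  linarith

/-- Lipschitz functions of `n / σ(n)` have a mean value over the sums of two squares. -/
lemma exists_tendsto_avg_lipschitz {φ : ℝ → ℝ} {L : ℝ} (hL : 0 < L)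
    (hφ : ∀ x y, |φ x - φ y| ≤ L * |x - y|) :
    ∃ l, Tendsto (fun N ↦ avg N fun n ↦ φ (sigmaRatio n)) atTop (𝓝 l) := by
  refine exists_tendsto_of_approx fun ε hε ↦ ?_
  obtain ⟨K, hK⟩ := exists_sum_large_divisors_le (div_pos hε hL)
  refine ⟨_, exists_tendsto_avg_gcd (fun k ↦ φ (sigmaRatio k)) K.factorial_ne_zero, ?_⟩
  filter_upwards [eventually_ge_atTop 1] with N hN
  refine abs_avg_sub_le hN (e := fun n ↦ L * ∑ d ∈ n.divisors, if K < d then (1 / d : ℝ) else 0)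
    (fun n hn ↦ ?_) ?_
  · have hn0 : n ≠ 0 := by have := (mem_sos.1 hn).1.1; omega
    exact (hφ _ _).trans (mul_le_mul_of_nonneg_left (abs_sigmaRatio_sub_le hn0 K) hL.le)
  · rw [← Finset.mul_sum]
    have := mul_le_mul_of_nonneg_left (hK N) hL.le
    refine this.trans (le_of_eq ?_)
    field_simp

/-- The sums of two squares up to `N` that no prime of `P` divides. -/
noncomputable def cop (P : Finset ℕ) (N : ℕ) : Finset ℕ := (sos N).filter fun n ↦ ∀ p ∈ P, ¬ p ∣ n

lemma mem_cop {P : Finset ℕ} {N n : ℕ} : n ∈ cop P N ↔ n ∈ sos N ∧ ∀ p ∈ P, ¬ p ∣ n := by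
  simp [cop]

/-- One step of the sieve. -/
lemma cop_insert {P : Finset ℕ} (hP : ∀ p ∈ P, p.Prime) {q : ℕ} (hq : q.Prime) (hqP : q ∉ P)
    (N : ℕ) : ((cop (insert q P) N).card : ℝ) = (cop P N).card - (cop P (N / lift q)).card := by
  have h1 : (cop P N).filter (q ∣ ·) = (cop P (N / lift q)).image (lift q * ·) := by
    ext n
    have h0 := Finset.ext_iff.1 (filter_dvd_sos hq.ne_zero N) n
    simp only [Finset.mem_filter, Finset.mem_image, mem_cop] at h0 ⊢
    have hcop {p : ℕ} (hp : p ∈ P) (m : ℕ) : p ∣ lift q * m ↔ p ∣ m := by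
      have : p.Coprime (lift q) := (coprime_lift ((Nat.coprime_primes hq (hP p hp)).2
        (by rintro rfl; exact hqP hp))).symm
      exact this.dvd_mul_left
    constructor
    · rintro ⟨⟨h2, h3⟩, h4⟩
      obtain ⟨m, hm, rfl⟩ := h0.1 ⟨h2, h4⟩
      exact ⟨m, ⟨hm, fun p hp hpm ↦ h3 p hp ((hcop hp m).2 hpm)⟩, rfl⟩
    · rintro ⟨m, ⟨hm, h3⟩, rfl⟩
      have h5 := h0.2 ⟨m, hm, rfl⟩
      exact ⟨⟨h5.1, fun p hp hpm ↦ h3 p hp ((hcop hp m).1 hpm)⟩, h5.2⟩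
  have h2 : cop (insert q P) N = (cop P N).filter fun n ↦ ¬ q ∣ n := by
    ext n
    simp only [mem_cop, Finset.mem_filter, Finset.mem_insert, forall_eq_or_imp]
    tauto
  have h3 := Finset.card_filter_add_card_filter_not (s := cop P N) (q ∣ ·)
  rw [h1, Finset.card_image_of_injective _ fun a b hab ↦
    Nat.eq_of_mul_eq_mul_left (lift_pos q) hab, ← h2] at h3
  rw [← h3]
  push_cast
  ring

/-- Sieving by finitely many primes. -/
lemma tendsto_cop {P : Finset ℕ} (hP : ∀ p ∈ P, p.Prime) :
    Tendsto (fun N ↦ ((cop P N).card : ℝ) / cnt N) atTop (𝓝 (∏ p ∈ P, (1 - 1 / (lift p : ℝ)))) := by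
  induction P using Finset.induction_on with
  | empty =>
    simp only [Finset.prod_empty]
    refine tendsto_const_nhds.congr' ?_
    filter_upwards [eventually_ge_atTop 1] with N hN
    have : cop ∅ N = sos N := by ext n; simp [mem_cop]
    rw [this]
    exact (div_self (cnt_pos hN).ne').symm
  | insert q P hqP ih =>
    have hP' : ∀ p ∈ P, p.Prime := fun p hp ↦ hP p (Finset.mem_insert_of_mem hp)
    have hq := hP q (Finset.mem_insert_self q P)
    have h1 := ih hP'
    have h2 := (h1.comp (Nat.tendsto_div_const_atTop (lift_ne_zero q))).mul (tendsto_cnt_lift q)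
    have h3 := h1.sub h2
    rw [Finset.prod_insert hqP]
    have e : ∏ p ∈ P, (1 - 1 / (lift p : ℝ)) - (∏ p ∈ P, (1 - 1 / (lift p : ℝ))) * (1 / lift q) =
        (1 - 1 / (lift q : ℝ)) * ∏ p ∈ P, (1 - 1 / (lift p : ℝ)) := by ring
    rw [e] at h3
    refine h3.congr' ?_
    filter_upwards [(Nat.tendsto_div_const_atTop (lift_ne_zero q)).eventually_ge_atTop 1] with N hN
    rw [cop_insert hP' hq hqP]
    have := (cnt_pos hN).ne'
    simp only [Function.comp_apply]
    field_simp

/-! ### Rarity of values near a given point -/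

lemma exists_prime_set (z : ℕ) (Q : ℝ) : ∃ P : Finset ℕ,
    (∀ p ∈ P, p.Prime ∧ p % 4 = 1 ∧ z < p) ∧ Q ≤ ∑ p ∈ P, (1 / p : ℝ) := by
  have h := not_summable_one_div_primes
  rw [not_summable_iff_tendsto_nat_atTop_of_nonneg (by intro n; split_ifs <;> positivity)] at h
  set r : ℕ → ℝ := fun p ↦ if p.Prime ∧ p % 4 = 1 then (1 / p : ℝ) else 0 with hr
  have hr0 (n : ℕ) : 0 ≤ r n := by
    simp only [hr]; split_ifs <;> positivity
  obtain ⟨K, hK⟩ := (h.eventually_ge_atTop (Q + ∑ p ∈ Finset.range (z + 1), r p)).exists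
  set P := (Finset.range K).filter fun p ↦ (p.Prime ∧ p % 4 = 1) ∧ z < p with hP
  refine ⟨P, fun p hp ↦ ?_, ?_⟩
  · have := (Finset.mem_filter.1 hp).2
    exact ⟨this.1.1, this.1.2, this.2⟩
  have h1 : ∑ p ∈ Finset.range K, r p ≤ ∑ p ∈ P ∪ Finset.range (z + 1), r p := by
    rw [← Finset.sum_filter_add_sum_filter_not (Finset.range K) (fun p ↦ p.Prime ∧ p % 4 = 1)]
    have h2 : ∑ x ∈ (Finset.range K).filter (fun p ↦ ¬ (p.Prime ∧ p % 4 = 1)), r x = 0 :=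
      Finset.sum_eq_zero fun x hx ↦ if_neg (Finset.mem_filter.1 hx).2
    rw [h2, add_zero]
    refine Finset.sum_le_sum_of_subset_of_nonneg (fun p hp ↦ ?_) fun _ _ _ ↦ hr0 _
    rw [Finset.mem_filter] at hp
    rw [Finset.mem_union, hP, Finset.mem_filter, Finset.mem_range (n := z + 1)]
    by_cases hz : z < p
    · exact Or.inl ⟨hp.1, hp.2, hz⟩
    · exact Or.inr (by omega)
  have h2 := Finset.sum_union_inter (s₁ := P) (s₂ := Finset.range (z + 1)) (f := r)
  have h3 : 0 ≤ ∑ p ∈ P ∩ Finset.range (z + 1), r p := Finset.sum_nonneg fun _ _ ↦ hr0 _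
  have h4 : ∑ p ∈ P, r p = ∑ p ∈ P, (1 / p : ℝ) :=
    Finset.sum_congr rfl fun p hp ↦ if_pos (Finset.mem_filter.1 hp).2.1
  change _ ≤ ∑ p ∈ Finset.range K, r p at hK
  linarith

/-- Large values of `σ(n) / n` are rare. -/
lemma small_ball_zero {ε : ℝ} (hε : 0 < ε) : ∃ δ > 0, ∀ N,
    (((sos N).filter fun n ↦ |sigmaRatio n - 0| ≤ δ).card : ℝ) ≤ ε * cnt N := by
  obtain ⟨C, hC0, hC⟩ := exists_sum_ssum_le
  refine ⟨ε / C, by positivity, fun N ↦ ?_⟩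
  have h1 : ∑ n ∈ (sos N).filter (fun n ↦ |sigmaRatio n - 0| ≤ ε / C), C / ε ≤
      ∑ n ∈ sos N, ssum n := by
    refine (Finset.sum_le_sum fun n hn ↦ ?_).trans (Finset.sum_le_sum_of_subset_of_nonneg
      (Finset.filter_subset _ _) fun _ _ _ ↦ Finset.sum_nonneg fun _ _ ↦ by positivity)
    rw [Finset.mem_filter] at hn
    have hn0 : n ≠ 0 := by have := (mem_sos.1 hn.1).1.1; omega
    have h2 := hn.2
    have h3 := one_le_ssum hn0
    rw [sub_zero, abs_of_pos (sigmaRatio_pos hn0), sigmaRatio_eq hn0,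
      div_le_div_iff₀ (by linarith) hC0] at h2
    rw [div_le_iff₀ hε]
    linarith
  rw [Finset.sum_const, nsmul_eq_mul] at h1
  have h2 := h1.trans (hC N)
  rw [mul_div_assoc', div_le_iff₀ hε] at h2
  have h3 : (((sos N).filter fun n ↦ |sigmaRatio n - 0| ≤ ε / C).card : ℝ) * C ≤
      ε * cnt N * C := by linarith
  exact le_of_mul_le_mul_right h3 hC0

/-- Integers with ratio close to `u` and having a simple prime factor in `P` are determined by
their cofactor, since the factors `p / (p + 1)` are separated. -/
lemma card_simple_factor_le {P : Finset ℕ} {z : ℕ} (hz : 0 < z)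
    (hP : ∀ p ∈ P, p.Prime ∧ p % 4 = 1 ∧ z < p) {u : ℝ} (hu : 0 < u) : ∃ δ > 0, ∀ N,
    (((sos N).filter fun n ↦ |sigmaRatio n - u| ≤ δ ∧ ∃ p ∈ P, p ∣ n ∧ ¬ p ^ 2 ∣ n).card : ℝ) ≤
      cnt (N / z) := by
  set B : ℕ := P.sup id
  have hB : ∀ p ∈ P, p ≤ B := fun p hp ↦ Finset.le_sup (f := id) hp
  set δ : ℝ := u / (8 * (B + 1) ^ 2) with hδ
  have hδ0 : 0 < δ := by positivity
  have hδ2 : δ ≤ u / 2 := by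
    refine div_le_div_of_nonneg_left hu.le (by norm_num) ?_
    have : (1 : ℝ) ≤ (B + 1) ^ 2 := one_le_pow₀ (by linarith [Nat.cast_nonneg (α := ℝ) B])
    linarith
  refine ⟨δ, hδ0, fun N ↦ ?_⟩
  set E := (sos N).filter fun n ↦ |sigmaRatio n - u| ≤ δ ∧ ∃ p ∈ P, p ∣ n ∧ ¬ p ^ 2 ∣ n
  have hE : ∀ n ∈ E, ∃ p m : ℕ, p ∈ P ∧ n = p * m ∧ p.Coprime m := by
    intro n hn
    obtain ⟨_, _, p, hp, ⟨m, rfl⟩, h2⟩ := Finset.mem_filter.1 hn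
    refine ⟨p, m, hp, rfl, ((hP p hp).1.coprime_iff_not_dvd).2 fun h ↦ h2 ?_⟩
    rw [pow_two]
    exact Nat.mul_dvd_mul_left p h
  choose! pf mf hf using hE
  refine Nat.cast_le.2 (Finset.card_le_card_of_injOn mf (fun n hn ↦ ?_) fun n hn n' hn' h ↦ ?_)
  · obtain ⟨hp, hnm, _⟩ := hf n hn
    obtain ⟨⟨h1, h2⟩, hS⟩ := mem_sos.1 (Finset.mem_filter.1 hn).1
    have hm0 : mf n ≠ 0 := by
      intro h0
      rw [h0, mul_zero] at hnm
      omega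
    obtain ⟨hpp, hp4, hpz⟩ := hP _ hp
    refine mem_sos.2 ⟨⟨Nat.pos_of_ne_zero hm0, ?_⟩, ?_⟩
    · rw [Nat.le_div_iff_mul_le hz, mul_comm]
      exact ((Nat.mul_le_mul_right _ hpz.le).trans hnm.ge).trans h2
    · rw [← isSumTwoSquares_mul_lift (d := pf n) hm0, lift_prime hpp (by omega), ← hnm]
      exact hS
  · obtain ⟨hp, hnm, hc⟩ := hf n hn
    obtain ⟨hp', hnm', hc'⟩ := hf n' hn'
    obtain ⟨⟨h1, _⟩, _⟩ := mem_sos.1 (Finset.mem_filter.1 hn).1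
    have hm0 : mf n ≠ 0 := by
      intro h0
      rw [h0, mul_zero] at hnm
      omega
    have hu1 := (Finset.mem_filter.1 hn).2.1
    have hu2 := (Finset.mem_filter.1 hn').2.1
    have hpp : pf n = pf n' := by
      by_contra hne
      rw [hnm, sigmaRatio_mul hc, sigmaRatio_prime (hP _ hp).1] at hu1
      rw [hnm', sigmaRatio_mul hc', sigmaRatio_prime (hP _ hp').1, ← h] at hu2
      have hm1 := sigmaRatio_pos hm0
      set x := sigmaRatio (mf n)
      have hb : (pf n : ℝ) ≤ B := by exact_mod_cast hB _ hp
      have hb' : (pf n' : ℝ) ≤ B := by exact_mod_cast hB _ hp'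
      have hgap : (1 : ℝ) ≤ |(pf n : ℝ) - pf n'| := by
        have h5 : (1 : ℤ) ≤ |(pf n : ℤ) - pf n'| :=
          Int.one_le_abs (sub_ne_zero.2 (by exact_mod_cast hne))
        exact_mod_cast h5
      have h0 := Nat.cast_nonneg (α := ℝ) (pf n)
      have h0' := Nat.cast_nonneg (α := ℝ) (pf n')
      set a : ℝ := ((pf n : ℕ) : ℝ)
      set b : ℝ := ((pf n' : ℕ) : ℝ)
      have hx : u / 2 ≤ x := by
        have h6 : a / (a + 1) ≤ 1 := by rw [div_le_one (by linarith)]; linarith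
        have h7 : a / (a + 1) * x ≤ 1 * x := mul_le_mul_of_nonneg_right h6 hm1.le
        rw [abs_le] at hu1
        linarith [hu1.1]
      have h8 : |a / (a + 1) - b / (b + 1)| * x ≤ 2 * δ := by
        rw [← abs_of_pos hm1, ← abs_mul]
        rw [abs_le] at hu1 hu2 ⊢
        constructor <;> linarith [hu1.1, hu1.2, hu2.1, hu2.2]
      have h9 : 1 / ((B : ℝ) + 1) ^ 2 ≤ |a / (a + 1) - b / (b + 1)| := by
        have e : a / (a + 1) - b / (b + 1) = (a - b) / ((a + 1) * (b + 1)) := by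
          field_simp; ring
        rw [e, abs_div, abs_of_pos (by positivity : 0 < (a + 1) * (b + 1)), pow_two]
        exact div_le_div₀ (abs_nonneg _) hgap (by positivity)
          (mul_le_mul (by linarith) (by linarith) (by linarith) (by positivity))
      have h10 := mul_le_mul h9 hx (by positivity) (abs_nonneg _)
      have h11 : 1 / ((B : ℝ) + 1) ^ 2 * (u / 2) = 4 * δ := by
        rw [hδ]; field_simp; norm_num
      linarith
    rw [hnm, hnm', hpp, h]

/-- Apart from a small proportion, every sum of two squares has a simple prime factor in a suitable
finite set `P` of primes `1` modulo `4`: the sieve removes the integers without a factor in `P`, and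
the size of the elements of `P` removes those divisible by the square of one. -/
lemma small_ball_pos {u ε : ℝ} (hu : 0 < u) (hε : 0 < ε) : ∃ δ > 0, ∀ᶠ N in atTop,
    (((sos N).filter fun n ↦ |sigmaRatio n - u| ≤ δ).card : ℝ) ≤ ε * cnt N := by
  obtain ⟨s, hs⟩ := summable_iff_vanishing_norm.1
    (Real.summable_one_div_nat_pow.2 (by norm_num : 1 < 2)) (ε / 4) (by positivity)
  obtain ⟨z', hz'⟩ := exists_nat_gt (4 / ε)
  set z := max (max (s.sup id) z') 1
  have hz0 : 0 < z := by simp [z]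
  have hz : 1 / (z : ℝ) < ε / 4 := by
    have h1 : (z' : ℝ) ≤ z := by exact_mod_cast (le_max_right _ _).trans (le_max_left _ _)
    have h2 : 4 / ε < z := hz'.trans_le h1
    rw [div_lt_iff₀ hε] at h2
    rw [div_lt_iff₀ (by exact_mod_cast hz0)]
    linarith
  obtain ⟨P, hP, hQ⟩ := exists_prime_set z (-Real.log (ε / 8))
  obtain ⟨δ, hδ0, hδ⟩ := card_simple_factor_le hz0 hP hu
  refine ⟨δ, hδ0, ?_⟩
  have hPp : ∀ p ∈ P, p.Prime := fun p hp ↦ (hP p hp).1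
  have h0 := tendsto_cop hPp
  have h0' : ∏ p ∈ P, (1 - 1 / (lift p : ℝ)) < ε / 4 := by
    calc ∏ p ∈ P, (1 - 1 / (lift p : ℝ)) ≤ ∏ p ∈ P, Real.exp (-(1 / p : ℝ)) := by
          refine Finset.prod_le_prod (fun p hp ↦ ?_) fun p hp ↦ ?_
          · have : (1 : ℝ) ≤ lift p := by exact_mod_cast lift_pos p
            rw [sub_nonneg, div_le_one (by linarith)]
            exact this
          · rw [lift_prime (hP p hp).1 (by have := (hP p hp).2.1; omega)]
            have := Real.add_one_le_exp (-(1 / p : ℝ))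
            linarith
      _ = Real.exp (-∑ p ∈ P, (1 / p : ℝ)) := by rw [← Real.exp_sum, Finset.sum_neg_distrib]
      _ ≤ Real.exp (Real.log (ε / 8)) := Real.exp_le_exp.2 (by linarith)
      _ = ε / 8 := Real.exp_log (by positivity)
      _ < ε / 4 := by linarith
  have h1 := tendsto_finsetSum P fun p hp ↦
    tendsto_cnt_div (m := p ^ 2) (pow_pos (hPp p hp).pos 2)
  have h1' : ∑ p ∈ P, (1 / ((p ^ 2 : ℕ) : ℝ)) < ε / 4 := by
    have := hs P (by
      rw [Finset.disjoint_left]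
      intro d hd hds
      have h1 := (hP d hd).2.2
      have h2 : d ≤ s.sup id := Finset.le_sup (f := id) hds
      have h3 : s.sup id ≤ z := (le_max_left _ _).trans (le_max_left _ _)
      omega)
    rw [Real.norm_of_nonneg (Finset.sum_nonneg fun _ _ ↦ by positivity)] at this
    simpa using this
  have h2 := tendsto_cnt_div hz0
  filter_upwards [h0.eventually (gt_mem_nhds h0'), h1.eventually (gt_mem_nhds h1'),
    h2.eventually (gt_mem_nhds hz), eventually_ge_atTop 1] with N g0 g1 g2 hN
  have hc := cnt_pos hN
  rw [← Finset.sum_div, div_lt_iff₀ hc] at g1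
  rw [div_lt_iff₀ hc] at g0 g2
  have hcover : ((sos N).filter fun n ↦ |sigmaRatio n - u| ≤ δ) ⊆
      (cop P N ∪ P.biUnion fun p ↦ (sos N).filter (p ^ 2 ∣ ·)) ∪
      (sos N).filter fun n ↦ |sigmaRatio n - u| ≤ δ ∧ ∃ p ∈ P, p ∣ n ∧ ¬ p ^ 2 ∣ n := by
    intro n hn
    simp only [Finset.mem_filter, Finset.mem_union, Finset.mem_biUnion, mem_cop] at hn ⊢
    by_cases hd : ∃ p ∈ P, p ∣ n
    · obtain ⟨p, hp, hpn⟩ := hd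
      by_cases h2 : p ^ 2 ∣ n
      · exact Or.inl (Or.inr ⟨p, hp, hn.1, h2⟩)
      · exact Or.inr ⟨hn.1, hn.2, p, hp, hpn, h2⟩
    · push Not at hd
      exact Or.inl (Or.inl ⟨hn.1, hd⟩)
  have hcard := (Finset.card_le_card hcover).trans ((Finset.card_union_le _ _).trans
    (Nat.add_le_add_right ((Finset.card_union_le _ _).trans
      (Nat.add_le_add_left Finset.card_biUnion_le _)) _))
  have hcard' := Nat.cast_le (α := ℝ).2 hcard
  push_cast at hcard'
  have hsq : ∑ p ∈ P, (((sos N).filter (p ^ 2 ∣ ·)).card : ℝ) ≤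
      ∑ p ∈ P, cnt (N / p ^ 2) := by
    refine Finset.sum_le_sum fun p hp ↦ ?_
    have hp2 : p ^ 2 ≠ 0 := pow_ne_zero 2 (hPp p hp).ne_zero
    rw [card_filter_dvd_sos hp2]
    exact cnt_mono (Nat.div_le_div_left (le_lift _) (Nat.pos_of_ne_zero hp2))
  have := hδ N
  nlinarith

/-- Small intervals capture a small proportion of the values `n / σ(n)`. -/
lemma small_ball {u ε : ℝ} (hu : 0 ≤ u) (hε : 0 < ε) : ∃ δ > 0, ∀ᶠ N in atTop,
    (((sos N).filter fun n ↦ |sigmaRatio n - u| ≤ δ).card : ℝ) ≤ ε * cnt N := by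
  rcases hu.eq_or_lt with rfl | hu
  · obtain ⟨δ, hδ, h⟩ := small_ball_zero hε
    exact ⟨δ, hδ, Eventually.of_forall h⟩
  · exact small_ball_pos hu hε

/-! ### Existence and continuity of the limit -/

/-- The proportion, among the sums of two squares up to `N`, of those with `n / σ(n) ≤ u`. -/
noncomputable def distFn (N : ℕ) (u : ℝ) : ℝ :=
  (((sos N).filter fun n ↦ sigmaRatio n ≤ u).card : ℝ) / cnt N

lemma exists_tendsto_distFn {u : ℝ} (hu : 0 ≤ u) :
    ∃ l, Tendsto (fun N ↦ distFn N u) atTop (𝓝 l) := by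
  refine exists_tendsto_of_approx fun ε hε ↦ ?_
  obtain ⟨δ, hδ, h⟩ := small_ball hu hε
  -- a continuous piecewise linear majorant of the indicator of `t ≤ u`
  set φ : ℝ → ℝ := fun t ↦ max 0 (min 1 (1 - (t - u) / δ)) with hφ
  refine ⟨fun N ↦ avg N fun n ↦ φ (sigmaRatio n),
    exists_tendsto_avg_lipschitz (L := 1 / δ) (by positivity) fun x y ↦ ?_, ?_⟩
  · calc |φ x - φ y| ≤ |min 1 (1 - (x - u) / δ) - min 1 (1 - (y - u) / δ)| := by
          simpa using abs_max_sub_max_le_max (0 : ℝ) (min 1 (1 - (x - u) / δ)) 0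
            (min 1 (1 - (y - u) / δ))
      _ ≤ |(1 - (x - u) / δ) - (1 - (y - u) / δ)| := by
          simpa using abs_min_sub_min_le_max (1 : ℝ) (1 - (x - u) / δ) 1 (1 - (y - u) / δ)
      _ = 1 / δ * |x - y| := by
          rw [show (1 - (x - u) / δ) - (1 - (y - u) / δ) = -(1 / δ * (x - y)) by ring, abs_neg,
            abs_mul, abs_of_pos (by positivity : 0 < 1 / δ)]
  · filter_upwards [h, eventually_ge_atTop 1] with N hN hN1
    have e : distFn N u = avg N fun n ↦ if sigmaRatio n ≤ u then 1 else 0 := by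
      simp [distFn, avg]
    rw [e]
    refine abs_avg_sub_le hN1 (e := fun n ↦ if |sigmaRatio n - u| ≤ δ then 1 else 0)
      (fun n _ ↦ ?_) (by simpa using hN)
    simp only [hφ]
    have h0 : 0 ≤ max 0 (min 1 (1 - (sigmaRatio n - u) / δ)) := le_max_left _ _
    have h1 : max 0 (min 1 (1 - (sigmaRatio n - u) / δ)) ≤ 1 :=
      max_le zero_le_one (min_le_left _ _)
    by_cases hle : sigmaRatio n ≤ u
    · have h2 : (sigmaRatio n - u) / δ ≤ 0 := div_nonpos_of_nonpos_of_nonneg (by linarith) hδ.le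
      rw [if_pos hle, min_eq_left (by linarith), max_eq_right zero_le_one, sub_self, abs_zero]
      split_ifs <;> norm_num
    · by_cases hb : |sigmaRatio n - u| ≤ δ
      · rw [if_neg hle, if_pos hb, abs_le]
        constructor <;> linarith
      · rw [if_neg hle, if_neg hb]
        push Not at hle hb
        rw [abs_of_pos (by linarith)] at hb
        have h2 : 1 < (sigmaRatio n - u) / δ := by rwa [lt_div_iff₀ hδ, one_mul]
        rw [max_eq_left ((min_le_right _ _).trans (by linarith))]
        simp

lemma card_interval (N : ℕ) {a b : ℝ} (hab : a ≤ b) : distFn N b - distFn N a =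
    (((sos N).filter fun n ↦ a < sigmaRatio n ∧ sigmaRatio n ≤ b).card : ℝ) / cnt N := by
  have h1 := Finset.card_filter_add_card_filter_not
    (s := (sos N).filter fun n ↦ sigmaRatio n ≤ b) (fun n ↦ sigmaRatio n ≤ a)
  rw [Finset.filter_filter, Finset.filter_filter] at h1
  have h2 : ((sos N).filter fun n ↦ sigmaRatio n ≤ b ∧ sigmaRatio n ≤ a) =
      (sos N).filter fun n ↦ sigmaRatio n ≤ a :=
    Finset.filter_congr fun n _ ↦ ⟨fun h ↦ h.2, fun h ↦ ⟨h.trans hab, h⟩⟩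
  have h3 : ((sos N).filter fun n ↦ sigmaRatio n ≤ b ∧ ¬ sigmaRatio n ≤ a) =
      (sos N).filter fun n ↦ a < sigmaRatio n ∧ sigmaRatio n ≤ b :=
    Finset.filter_congr fun n _ ↦ by rw [not_le, and_comm]
  rw [h2, h3] at h1
  rw [distFn, distFn, ← h1]
  push_cast
  ring

/-- Values close to `u` are rare, which makes any limit of the proportions continuous. -/
lemma continuousOn_of_tendsto {D : ℝ → ℝ}
    (hD : ∀ u ∈ Icc (0 : ℝ) 1, Tendsto (fun N ↦ distFn N u) atTop (𝓝 (D u))) :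
    ContinuousOn D (Icc 0 1) := by
  rw [Metric.continuousOn_iff]
  intro u hu ε hε
  obtain ⟨δ, hδ, h⟩ := small_ball hu.1 (half_pos hε)
  refine ⟨δ, hδ, fun v hv hvu ↦ ?_⟩
  rw [Real.dist_eq] at hvu ⊢
  have hvu := abs_lt.1 hvu
  refine lt_of_le_of_lt ?_ (half_lt_self hε)
  refine le_of_tendsto ((hD v hv).sub (hD u hu)).abs ?_
  filter_upwards [h, eventually_ge_atTop 1] with N hN hN1
  have hc := cnt_pos hN1
  have key : ∀ a b : ℝ, a ≤ b → u - δ ≤ a → b ≤ u + δ → |distFn N b - distFn N a| ≤ ε / 2 := by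
    intro a b hab ha hb
    rw [card_interval N hab, abs_of_nonneg (by positivity), div_le_iff₀ hc]
    refine le_trans (Nat.cast_le.2 (Finset.card_le_card fun n hn ↦ ?_)) hN
    rw [Finset.mem_filter] at hn ⊢
    refine ⟨hn.1, abs_le.2 ⟨by linarith [hn.2.1], by linarith [hn.2.2]⟩⟩
  rcases le_total u v with h' | h'
  · exact key u v h' (by linarith) (by linarith)
  · rw [abs_sub_comm]
    exact key v u h' (by linarith) (by linarith)

/-! ### Strict monotonicity -/

lemma sigmaRatio_prod {P : Finset ℕ} (hP : ∀ p ∈ P, p.Prime ∧ p % 4 = 1) :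
    (∏ p ∈ P, p ≠ 0 ∧ IsSumTwoSquares (∏ p ∈ P, p)) ∧
      sigmaRatio (∏ p ∈ P, p) = ∏ p ∈ P, (p / (p + 1) : ℝ) := by
  induction P using Finset.induction_on with
  | empty => exact ⟨⟨by simp, by simpa using ⟨1, 0, by norm_num⟩⟩, by simp [sigmaRatio_one]⟩
  | insert q P hq ih =>
    obtain ⟨⟨h0, h1⟩, h2⟩ := ih fun p hp ↦ hP p (Finset.mem_insert_of_mem hp)
    obtain ⟨hqp, hq4⟩ := hP q (Finset.mem_insert_self _ _)
    have hc : q.Coprime (∏ p ∈ P, p) := Nat.Coprime.prod_right fun p hp ↦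
      (Nat.coprime_primes hqp (hP p (Finset.mem_insert_of_mem hp)).1).2 (by rintro rfl; exact hq hp)
    rw [Finset.prod_insert hq, Finset.prod_insert hq, sigmaRatio_mul hc, h2, sigmaRatio_prime hqp]
    refine ⟨⟨mul_ne_zero hqp.ne_zero h0, ?_⟩, rfl⟩
    have := (isSumTwoSquares_mul_lift (d := q) h0).2 h1
    rwa [lift_prime hqp (by omega)] at this

/-- A product of factors close to `1` that gets below `b` passes through `(a, b]`. -/
lemma exists_subset_sigmaRatio {a b : ℝ} (hab : a < b) (hb1 : b ≤ 1)
    {P : Finset ℕ} (hP : ∀ p ∈ P, a < (p / (p + 1) : ℝ) * b)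
    (h : ∏ p ∈ P, (p / (p + 1) : ℝ) ≤ b) :
    ∃ P' ⊆ P, a < ∏ p ∈ P', (p / (p + 1) : ℝ) ∧ ∏ p ∈ P', (p / (p + 1) : ℝ) ≤ b := by
  induction P using Finset.induction_on with
  | empty => exact ⟨∅, Finset.Subset.refl _, by simp; linarith, h⟩
  | insert q P hq ih =>
    by_cases hle : ∏ p ∈ P, (p / (p + 1) : ℝ) ≤ b
    · obtain ⟨P', h1, h2⟩ := ih (fun p hp ↦ hP p (Finset.mem_insert_of_mem hp)) hle
      exact ⟨P', h1.trans (Finset.subset_insert _ _), h2⟩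
    · refine ⟨insert q P, Finset.Subset.refl _, ?_, h⟩
      rw [Finset.prod_insert hq]
      refine (hP q (Finset.mem_insert_self _ _)).trans_le ?_
      exact mul_le_mul_of_nonneg_left (not_le.1 hle).le (by positivity)

/-- The values `n / σ(n)`, for `n` a sum of two squares, are dense in `[0, 1]`. -/
lemma exists_sigmaRatio_mem {a b : ℝ} (ha : 0 < a) (hab : a < b) (hb1 : b ≤ 1) :
    ∃ m, m ≠ 0 ∧ IsSumTwoSquares m ∧ a < sigmaRatio m ∧ sigmaRatio m ≤ b := by
  obtain ⟨z, hz⟩ := exists_nat_gt (a / (b - a))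
  rw [div_lt_iff₀ (by linarith)] at hz
  obtain ⟨P, hP, hQ⟩ := exists_prime_set z (-(2 * Real.log b))
  have hP1 : ∀ p ∈ P, a < (p / (p + 1) : ℝ) * b := by
    intro p hp
    have hzp : (z : ℝ) ≤ p := by exact_mod_cast (hP p hp).2.2.le
    rw [div_mul_eq_mul_div, lt_div_iff₀ (by positivity)]
    nlinarith
  have hle : ∏ p ∈ P, (p / (p + 1) : ℝ) ≤ b := by
    calc ∏ p ∈ P, (p / (p + 1) : ℝ) ≤ ∏ p ∈ P, Real.exp (-(1 / p / 2)) := by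
          refine Finset.prod_le_prod (fun _ _ ↦ by positivity) fun p hp ↦ ?_
          have hp1 : (1 : ℝ) ≤ p := by exact_mod_cast (hP p hp).1.one_lt.le
          refine le_trans ?_ (Real.add_one_le_exp _)
          rw [div_le_iff₀ (by positivity)]
          have e : (-(1 / (p : ℝ) / 2) + 1) * (p + 1) = p + (1 - 1 / p) / 2 := by
            field_simp; ring
          have : 1 / (p : ℝ) ≤ 1 := by rw [div_le_one (by linarith)]; exact hp1
          rw [e]; linarith
      _ = Real.exp (-((∑ p ∈ P, (1 / p : ℝ)) / 2)) := by
          rw [← Real.exp_sum, Finset.sum_neg_distrib, Finset.sum_div]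
      _ ≤ Real.exp (Real.log b) := Real.exp_le_exp.2 (by linarith)
      _ = b := Real.exp_log (ha.trans hab)
  obtain ⟨P', hs, h1, h2⟩ := exists_subset_sigmaRatio hab hb1 hP1 hle
  obtain ⟨h3, h4⟩ := sigmaRatio_prod (P := P') fun p hp ↦
    ⟨(hP p (hs hp)).1, (hP p (hs hp)).2.1⟩
  exact ⟨_, h3.1, h3.2, h4 ▸ h1, h4 ▸ h2⟩

lemma cop_mono (P : Finset ℕ) {M N : ℕ} (h : M ≤ N) : cop P M ⊆ cop P N := by
  intro n hn
  rw [mem_cop] at hn ⊢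
  exact ⟨sos_mono h hn.1, hn.2⟩

lemma card_cop_le (P : Finset ℕ) (N : ℕ) : ((cop P N).card : ℝ) ≤ cnt N :=
  Nat.cast_le.2 (Finset.card_le_card (Finset.filter_subset _ _))

lemma card_filter_dvd_cop {d : ℕ} (hd : d ≠ 0) (P : Finset ℕ) (N : ℕ) :
    ((cop P N).filter (d ∣ ·)).card ≤ (cop P (N / d)).card := by
  have h1 : (cop P N).filter (d ∣ ·) ⊆ (cop P (N / lift d)).image (lift d * ·) := by
    intro n hn
    rw [Finset.mem_filter, mem_cop] at hn
    have h0 : n ∈ (sos N).filter (d ∣ ·) := Finset.mem_filter.2 ⟨hn.1.1, hn.2⟩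
    rw [filter_dvd_sos hd, Finset.mem_image] at h0
    obtain ⟨m, hm, rfl⟩ := h0
    exact Finset.mem_image.2 ⟨m, mem_cop.2 ⟨hm, fun p hp h ↦ hn.1.2 p hp (h.mul_left _)⟩, rfl⟩
  refine (Finset.card_le_card h1).trans (Finset.card_image_le.trans ?_)
  exact Finset.card_le_card
    (cop_mono P (Nat.div_le_div_left (le_lift d) (Nat.pos_of_ne_zero hd)))

/-- The contribution of large divisors to the members of `cop P N`. -/
lemma sum_cop_divisors_le (P : Finset ℕ) (K N : ℕ) :
    ∑ k ∈ cop P N, ∑ d ∈ k.divisors, (if K < d then (1 / d : ℝ) else 0) ≤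
      ∑ d ∈ Finset.Icc 1 N, (if K < d then (1 / d : ℝ) else 0) * (cop P (N / d)).card := by
  have h1 : ∀ k ∈ cop P N, ∑ d ∈ k.divisors, (if K < d then (1 / d : ℝ) else 0) =
      ∑ d ∈ Finset.Icc 1 N, if d ∣ k then (if K < d then (1 / d : ℝ) else 0) else 0 := by
    intro k hk
    have hk' := (mem_sos.1 (mem_cop.1 hk).1).1
    rw [← Finset.sum_filter (s := Finset.Icc 1 N)]
    refine Finset.sum_congr ?_ fun _ _ ↦ rfl
    ext d
    rw [Nat.mem_divisors, Finset.mem_filter, Finset.mem_Icc]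
    constructor
    · rintro ⟨h, _⟩
      exact ⟨⟨Nat.pos_of_dvd_of_pos h (by omega), (Nat.le_of_dvd (by omega) h).trans hk'.2⟩, h⟩
    · rintro ⟨_, h⟩
      exact ⟨h, by omega⟩
  rw [Finset.sum_congr rfl h1, Finset.sum_comm]
  refine Finset.sum_le_sum fun d hd ↦ ?_
  rw [← Finset.sum_filter, Finset.sum_const, nsmul_eq_mul, mul_comm]
  refine mul_le_mul_of_nonneg_left (Nat.cast_le.2 (card_filter_dvd_cop ?_ P N)) ?_
  · rw [Finset.mem_Icc] at hd; omega
  · split_ifs <;> positivity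

lemma tendsto_cop_div {P : Finset ℕ} (hP : ∀ p ∈ P, p.Prime) {d : ℕ} (hd : 0 < d) :
    Tendsto (fun N ↦ ((cop P (N / d)).card : ℝ) / cnt N) atTop
      (𝓝 ((∏ p ∈ P, (1 - 1 / (lift p : ℝ))) * (1 / d))) := by
  have h := ((tendsto_cop hP).comp (Nat.tendsto_div_const_atTop hd.ne')).mul (tendsto_cnt_div hd)
  refine h.congr' ?_
  filter_upwards [eventually_ge_atTop d] with N hN
  have := cnt_pos (Nat.div_pos hN hd)
  exact div_mul_div_cancel₀ this.ne'

/-- Dominated convergence for the sum over large divisors. The sieve density of `P` is a factor of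
the limit, so the tail is small relative to `cop P N`, uniformly in `P`. -/
lemma tendsto_sum_cop {P : Finset ℕ} (hP : ∀ p ∈ P, p.Prime) (K : ℕ) :
    Tendsto (fun N ↦ ∑' d : ℕ, (if K < d then (1 / d : ℝ) else 0) *
      (((cop P (N / d)).card : ℝ) / cnt N)) atTop
      (𝓝 ((∏ p ∈ P, (1 - 1 / (lift p : ℝ))) * ∑' d : ℕ, if K < d then (1 / d ^ 2 : ℝ) else 0)) := by
  obtain ⟨C, hC0, hC⟩ := exists_cnt_div_le
  rw [← tsum_mul_left]
  refine tendsto_tsum_of_dominated_convergence (summable_inv_mul_sqrt.mul_left C)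
    (fun d ↦ ?_) (Eventually.of_forall fun N d ↦ ?_)
  · by_cases hd : K < d
    · simp only [if_pos hd]
      have := (tendsto_cop_div hP (d := d) (by omega)).const_mul (1 / d : ℝ)
      convert this using 2
      ring
    · simp [if_neg hd]
  · have hc := cnt_nonneg N
    rw [Real.norm_of_nonneg (mul_nonneg (by split_ifs <;> positivity) (by positivity))]
    split_ifs with hd
    · have h1 := (card_cop_le P (N / d)).trans (hC d N (by omega))
      have h2 : ((cop P (N / d)).card : ℝ) / cnt N ≤ C / √d :=
        div_le_of_le_mul₀ hc (by positivity) h1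
      calc (1 / d : ℝ) * (((cop P (N / d)).card : ℝ) / cnt N) ≤ 1 / d * (C / √d) :=
            mul_le_mul_of_nonneg_left h2 (by positivity)
        _ = C * (1 / d * (1 / √d)) := by ring
    · rw [zero_mul]; positivity

lemma sum_cop_le_tsum (P : Finset ℕ) (K N : ℕ) :
    ∑ d ∈ Finset.Icc 1 N, (if K < d then (1 / d : ℝ) else 0) * (cop P (N / d)).card ≤
      (∑' d : ℕ, (if K < d then (1 / d : ℝ) else 0) *
        (((cop P (N / d)).card : ℝ) / cnt N)) * cnt N := by
  rcases Nat.eq_zero_or_pos N with rfl | hN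
  · simp [cnt_zero]
  have hc := cnt_pos hN
  rw [tsum_eq_sum (s := Finset.Icc 1 N), Finset.sum_mul]
  · refine (Finset.sum_congr rfl fun d _ ↦ ?_).le
    field_simp
  · intro d hd
    rw [Finset.mem_Icc] at hd
    have h0 : cop P 0 = ∅ := by simp [cop, sos]
    rcases Nat.eq_zero_or_pos d with rfl | hd0
    · simp
    · rw [Nat.div_eq_of_lt (by omega), h0]; simp

lemma exists_tail_le {ε : ℝ} (hε : 0 < ε) (K₀ : ℕ) :
    ∃ K ≥ K₀, ∑' d : ℕ, (if K < d then (1 / d ^ 2 : ℝ) else 0) ≤ ε := by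
  obtain ⟨s, hs⟩ := summable_iff_vanishing_norm.1
    (Real.summable_one_div_nat_pow.2 (by norm_num : 1 < 2)) ε hε
  refine ⟨max K₀ (s.sup id), le_max_left _ _, ?_⟩
  refine Real.tsum_le_of_sum_le (fun d ↦ by split_ifs <;> positivity) fun t ↦ ?_
  rw [← Finset.sum_filter]
  refine (le_abs_self _).trans (hs _ ?_).le
  rw [Finset.disjoint_left]
  intro d hd hds
  have h1 : d ≤ s.sup id := Finset.le_sup (f := id) hds
  have := (Finset.mem_filter.1 hd).2
  omega

/-- A positive proportion of the sums of two squares have no small prime factor and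
`n / σ(n)` close to `1`. -/
lemma exists_rough {η : ℝ} (hη : 0 < η) {m : ℕ} (hm : m ≠ 0) : ∃ c > 0, ∀ᶠ N in atTop,
    c * cnt N ≤ (((sos N).filter fun k ↦ m.Coprime k ∧ 1 - η ≤ sigmaRatio k).card : ℝ) := by
  obtain ⟨K, hK, hT⟩ := exists_tail_le (by positivity : 0 < η / 4) m
  set P : Finset ℕ := (Finset.range (K + 1)).filter Nat.Prime with hPdef
  have hP : ∀ p ∈ P, p.Prime := fun p hp ↦ (Finset.mem_filter.1 hp).2
  have hcop : ∀ N, ∀ k ∈ cop P N, k.Coprime K.factorial := by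
    intro N k hk
    refine Nat.coprime_of_dvd fun p hp h1 h2 ↦ ?_
    exact (mem_cop.1 hk).2 p (Finset.mem_filter.2
      ⟨Finset.mem_range.2 (Nat.lt_succ_of_le (hp.dvd_factorial.1 h2)), hp⟩) h1
  set δ : ℝ := ∏ p ∈ P, (1 - 1 / (lift p : ℝ)) with hδ
  have hδ0 : 0 < δ := Finset.prod_pos fun p hp ↦ by
    have h2 : (1 : ℝ) < lift p := by exact_mod_cast (hP p hp).one_lt.trans_le (le_lift p)
    have : 1 / (lift p : ℝ) < 1 := by rw [div_lt_one (by linarith)]; exact h2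
    linarith
  refine ⟨δ / 4, by positivity, ?_⟩
  have hlim := (tendsto_sum_cop hP K).eventually_lt_const (u := δ * η / 2) (by
    have := mul_le_mul_of_nonneg_left hT hδ0.le
    have h3 := mul_pos hδ0 hη
    rw [← hδ]; linarith)
  have hlim2 := (tendsto_cop hP).eventually_const_lt (u := 3 * δ / 4) (by
    rw [← hδ]; linarith)
  filter_upwards [hlim, hlim2, eventually_ge_atTop 1] with N h1 h2 hN
  have hc := cnt_pos hN
  rw [lt_div_iff₀ hc] at h2
  -- the exceptional elements have many large divisors
  have hbad : η * (((cop P N).filter fun k ↦ ¬ 1 - η ≤ sigmaRatio k).card : ℝ) ≤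
      δ * η / 2 * cnt N := by
    calc η * (((cop P N).filter fun k ↦ ¬ 1 - η ≤ sigmaRatio k).card : ℝ)
        = ∑ k ∈ (cop P N).filter (fun k ↦ ¬ 1 - η ≤ sigmaRatio k), η := by
          rw [Finset.sum_const, nsmul_eq_mul, mul_comm]
      _ ≤ ∑ k ∈ (cop P N).filter (fun k ↦ ¬ 1 - η ≤ sigmaRatio k),
          ∑ d ∈ k.divisors, (if K < d then (1 / d : ℝ) else 0) := by
          refine Finset.sum_le_sum fun k hk ↦ ?_
          obtain ⟨hk1, hk2⟩ := Finset.mem_filter.1 hk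
          have hk0 : k ≠ 0 := by
            have := (mem_sos.1 (mem_cop.1 hk1).1).1
            omega
          have h3 := abs_sigmaRatio_sub_le hk0 K
          rw [(hcop N k hk1 : k.gcd K.factorial = 1), sigmaRatio_one] at h3
          have := neg_abs_le (sigmaRatio k - 1)
          linarith
      _ ≤ ∑ k ∈ cop P N, ∑ d ∈ k.divisors, (if K < d then (1 / d : ℝ) else 0) :=
          Finset.sum_le_sum_of_subset_of_nonneg (Finset.filter_subset _ _) fun _ _ _ ↦
            Finset.sum_nonneg fun _ _ ↦ by split_ifs <;> positivity
      _ ≤ _ := sum_cop_divisors_le P K N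
      _ ≤ _ := sum_cop_le_tsum P K N
      _ ≤ δ * η / 2 * cnt N := mul_le_mul_of_nonneg_right h1.le hc.le
  have hbad' : (((cop P N).filter fun k ↦ ¬ 1 - η ≤ sigmaRatio k).card : ℝ) ≤ δ / 2 * cnt N := by
    refine le_of_mul_le_mul_left (hbad.trans (le_of_eq ?_)) hη
    ring
  have hsplit : ((((cop P N).filter fun k ↦ 1 - η ≤ sigmaRatio k).card : ℕ) : ℝ) +
      (((cop P N).filter fun k ↦ ¬ 1 - η ≤ sigmaRatio k).card : ℝ) = (cop P N).card := by
    exact_mod_cast Finset.card_filter_add_card_filter_not (s := cop P N)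
      (fun k ↦ 1 - η ≤ sigmaRatio k)
  have hgood : (((cop P N).filter fun k ↦ 1 - η ≤ sigmaRatio k).card : ℝ) ≤
      (((sos N).filter fun k ↦ m.Coprime k ∧ 1 - η ≤ sigmaRatio k).card : ℝ) := by
    refine Nat.cast_le.2 (Finset.card_le_card fun k hk ↦ ?_)
    obtain ⟨hk1, hk2⟩ := Finset.mem_filter.1 hk
    refine Finset.mem_filter.2 ⟨(mem_cop.1 hk1).1, ?_, hk2⟩
    exact ((hcop N k hk1).coprime_dvd_right
      (Nat.dvd_factorial (Nat.pos_of_ne_zero hm) hK)).symm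
  linarith

lemma isSumTwoSquares_mul {m n : ℕ} (hm : IsSumTwoSquares m) (hn : IsSumTwoSquares n) :
    IsSumTwoSquares (m * n) := by
  obtain ⟨a, b, h⟩ := hm
  obtain ⟨c, d, h'⟩ := hn
  exact ⟨a * c - b * d, a * d + b * c, by push_cast; rw [h, h']; ring⟩

/-- Every interval inside `[0, 1]` receives a positive proportion of the values. -/
lemma exists_interval {a b : ℝ} (ha : 0 ≤ a) (hab : a < b) (hb1 : b ≤ 1) : ∃ c > 0,
    ∀ᶠ N in atTop, c ≤ distFn N b - distFn N a := by
  obtain ⟨m, hm, hmS, hm1, hm2⟩ := exists_sigmaRatio_mem (a := (a + b) / 2) (by linarith)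
    (by linarith) hb1
  have hmpos := sigmaRatio_pos hm
  set η : ℝ := (b - a) / 4 with hη
  have hη0 : 0 < η := by rw [hη]; linarith
  have hmle := sigmaRatio_le_one hm
  obtain ⟨c, hc, h⟩ := exists_rough hη0 hm
  have hm0 : 0 < m := Nat.pos_of_ne_zero hm
  have hmr : (0 : ℝ) < m := by exact_mod_cast hm0
  refine ⟨c * (1 / (2 * m)), by positivity, ?_⟩
  have hlim := (tendsto_cnt_div hm0).eventually (lt_mem_nhds (a := 1 / (2 * m : ℝ)) (by
    rw [one_div_lt_one_div (by positivity) hmr]; linarith))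
  filter_upwards [hlim, (Nat.tendsto_div_const_atTop hm).eventually h,
    eventually_ge_atTop 1] with N h1 h2 hN
  have hcN := cnt_pos hN
  rw [lt_div_iff₀ hcN] at h1
  rw [card_interval N hab.le, le_div_iff₀ hcN]
  have h3 : (((sos (N / m)).filter fun k ↦ m.Coprime k ∧ 1 - η ≤ sigmaRatio k).card : ℝ) ≤
      (((sos N).filter fun n ↦ a < sigmaRatio n ∧ sigmaRatio n ≤ b).card : ℝ) := by
    refine Nat.cast_le.2 (Finset.card_le_card_of_injOn (m * ·) (fun k hk ↦ ?_)
      fun _ _ _ _ h ↦ Nat.eq_of_mul_eq_mul_left hm0 h)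
    rw [Finset.mem_coe, Finset.mem_filter, mem_sos] at hk
    obtain ⟨⟨⟨hk1, hkN⟩, hkS⟩, hkc, hkη⟩ := hk
    have hk0 : k ≠ 0 := by omega
    rw [Finset.mem_coe, Finset.mem_filter, mem_sos, sigmaRatio_mul hkc]
    have hkle := sigmaRatio_le_one hk0
    refine ⟨⟨⟨Nat.mul_pos hm0 hk1, ?_⟩, isSumTwoSquares_mul hmS hkS⟩, ?_, ?_⟩
    · exact (mul_comm m k).le.trans ((Nat.le_div_iff_mul_le hm0).1 hkN)
    · have h4 := mul_le_mul_of_nonneg_left hkη hmpos.le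
      nlinarith
    · have h4 := mul_le_mul_of_nonneg_left hkle hmpos.le
      linarith
  calc c * (1 / (2 * m)) * cnt N = c * (1 / (2 * m) * cnt N) := by ring
    _ ≤ c * cnt (N / m) := mul_le_mul_of_nonneg_left h1.le hc.le
    _ ≤ _ := h2.trans h3

lemma strictMonoOn_of_tendsto {D : ℝ → ℝ}
    (hD : ∀ u ∈ Icc (0 : ℝ) 1, Tendsto (fun N ↦ distFn N u) atTop (𝓝 (D u))) :
    StrictMonoOn D (Icc 0 1) := by
  intro a ha b hb hab
  obtain ⟨c, hc, h⟩ := exists_interval ha.1 hab hb.2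
  have := ge_of_tendsto ((hD b hb).sub (hD a ha)) h
  linarith

lemma ncard_eq (N : ℕ) :
    (Set.ncard {n : ℕ | 1 ≤ n ∧ n ≤ N ∧ IsSumTwoSquares n} : ℝ) = cnt N := by
  have : {n : ℕ | 1 ≤ n ∧ n ≤ N ∧ IsSumTwoSquares n} = ↑(sos N) := by
    ext n
    simp [mem_sos, and_assoc]
  rw [this, Set.ncard_coe_finset, cnt]

lemma ncard_filter_eq (N : ℕ) (u : ℝ) :
    (Set.ncard {n : ℕ | 1 ≤ n ∧ n ≤ N ∧ IsSumTwoSquares n ∧ sigmaRatio n ≤ u} : ℝ) =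
      ((sos N).filter fun n ↦ sigmaRatio n ≤ u).card := by
  have : {n : ℕ | 1 ≤ n ∧ n ≤ N ∧ IsSumTwoSquares n ∧ sigmaRatio n ≤ u} =
      ↑((sos N).filter fun n ↦ sigmaRatio n ≤ u) := by
    ext n
    simp [mem_sos, and_assoc]
  rw [this, Set.ncard_coe_finset]

end SumTwoSq

open SumTwoSq in
theorem davenport_analogue_sums_of_two_squares_set :
    ∃ D : ℝ → ℝ, ContinuousOn D (Set.Icc 0 1) ∧ StrictMonoOn D (Set.Icc 0 1) ∧
      ∀ u ∈ Set.Icc (0 : ℝ) 1,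
        Tendsto (fun N : ℕ =>
            (Set.ncard {n : ℕ | 1 ≤ n ∧ n ≤ N ∧ IsSumTwoSquares n ∧ sigmaRatio n ≤ u} : ℝ) /
              (Set.ncard {n : ℕ | 1 ≤ n ∧ n ≤ N ∧ IsSumTwoSquares n} : ℝ))
          atTop (nhds (D u)) := by
  have hex : ∀ u : ℝ, ∃ l : ℝ, 0 ≤ u →
      Tendsto (fun N ↦ distFn N u) atTop (nhds l) := by
    intro u
    by_cases hu : 0 ≤ u
    · obtain ⟨l, hl⟩ := exists_tendsto_distFn hu
      exact ⟨l, fun _ ↦ hl⟩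
    · exact ⟨0, fun h ↦ absurd h hu⟩
  choose D hD using hex
  have hD' : ∀ u ∈ Set.Icc (0 : ℝ) 1,
      Tendsto (fun N ↦ distFn N u) atTop (nhds (D u)) := fun u hu ↦ hD u hu.1
  refine ⟨D, continuousOn_of_tendsto hD', strictMonoOn_of_tendsto hD',
    fun u hu ↦ ?_⟩
  simp only [ncard_eq, ncard_filter_eq]
  exact hD' u hu
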